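/- arXiv:1708.05017 — 8 statements merged into one kernel-verified Lean document; each statement's English description precedes it below -/
import Mathlib

section
/- Define ω(x) = 0 if x ∈ A, ω(x) = 1 if x ∈ R \ A, and ω(x) = 2 if x ∉ A ∪ R. Then for every x ∈ ℝ², ω(x) = max{ s ∈ {0,1,2} : limsup_{r→0⁺} μ(closedBall(x,r))/r^s < ∞ }. In other words: for x ∈ A the ratio μ(closedBall(x,r))/r^s diverges as r→0⁺ for s = 1 and s = 2; for x ∈ R \ A the ratio stays bounded for s = 1 but diverges for s = 2; and for x ∉ A ∪ R the ratio stays bounded for s = 2 (the s = 0 ratio is always bounded by 1). -/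
open MeasureTheory Filter Metric Set Topology

/-!
The exponents are read off from the upper and lower `s`-densities of `μ` at `x`. A positive lower
`s`-density makes all ratios with larger exponents diverge, and a finite upper `s`-density bounds
all ratios with exponent at most `s`. An atom has positive lower `0`-density. A weighted curve which
is bi-Lipschitz in its parameter has, at its own points, `1`-densities comparable to those of
Lebesgue measure on the parameter interval, and upper density zero elsewhere because its image is
closed. A measure of bounded density in dimension `d` has finite upper `d`-density everywhere. In
the mixture, the component of smallest exponent that charges every neighbourhood of `x` decides.
-/

open scoped ENNReal NNReal

section Density

variable {X : Type*} [PseudoMetricSpace X] [MeasurableSpace X]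

/-- The ratio `μ(B̄(x,r)) / r^s`, for a natural exponent `s`; it is meant for `0 < r`. -/
noncomputable def ballRatio (μ : Measure X) (s : ℕ) (x : X) (r : ℝ) : ℝ≥0∞ :=
  μ (closedBall x r) / ENNReal.ofReal (r ^ s)

/-- The upper `s`-density of `μ` at `x`, as in geometric measure theory but without the normalizing
volume of the unit ball. -/
noncomputable def upperDensity (μ : Measure X) (s : ℕ) (x : X) : ℝ≥0∞ :=
  limsup (ballRatio μ s x) (𝓝[>] 0)

/-- The lower `s`-density of `μ` at `x`, normalized like `upperDensity`. -/
noncomputable def lowerDensity (μ : Measure X) (s : ℕ) (x : X) : ℝ≥0∞ :=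
  liminf (ballRatio μ s x) (𝓝[>] 0)

/-- The largest exponent `s ≤ d` for which `μ(B̄(x,r)) / r^s` stays bounded as `r → 0⁺`. If there is
none (`μ` not locally finite at `x`), the value is the junk `sSup ∅ = 0`. -/
noncomputable def maxBoundedExponent (μ : Measure X) (d : ℕ) (x : X) : ℕ :=
  sSup {s : ℕ | s ≤ d ∧ upperDensity μ s x < ⊤}

variable {μ ν : Measure X} {s t d : ℕ} {x : X}

lemma ofReal_pow_ne_zero {r : ℝ} (hr : 0 < r) (s : ℕ) : ENNReal.ofReal (r ^ s) ≠ 0 :=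
  (ENNReal.ofReal_pos.2 (pow_pos hr s)).ne'

lemma ballRatio_le_iff {C : ℝ≥0∞} {r : ℝ} (hr : 0 < r) :
    ballRatio μ s x r ≤ C ↔ μ (closedBall x r) ≤ C * ENNReal.ofReal (r ^ s) :=
  ENNReal.div_le_iff (ofReal_pow_ne_zero hr s) ENNReal.ofReal_ne_top

lemma le_ballRatio_iff {C : ℝ≥0∞} {r : ℝ} (hr : 0 < r) :
    C ≤ ballRatio μ s x r ↔ C * ENNReal.ofReal (r ^ s) ≤ μ (closedBall x r) :=
  ENNReal.le_div_iff_mul_le (.inl (ofReal_pow_ne_zero hr s)) (.inl ENNReal.ofReal_ne_top)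

lemma upperDensity_lt_top_iff :
    upperDensity μ s x < ⊤ ↔
      ∃ C ≠ ⊤, ∀ᶠ r in 𝓝[>] (0 : ℝ), μ (closedBall x r) ≤ C * ENNReal.ofReal (r ^ s) := by
  constructor
  · intro h
    obtain ⟨C, hC, hCtop⟩ := exists_between h
    refine ⟨C, hCtop.ne, ?_⟩
    filter_upwards [eventually_lt_of_limsup_lt hC, self_mem_nhdsWithin] with r hr hr0
    exact (ballRatio_le_iff hr0).1 hr.le
  · rintro ⟨C, hC, h⟩
    refine (limsup_le_of_le (h := ?_)).trans_lt hC.lt_top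
    filter_upwards [h, self_mem_nhdsWithin] with r hr hr0
    exact (ballRatio_le_iff hr0).2 hr

lemma lowerDensity_pos_iff :
    0 < lowerDensity μ s x ↔
      ∃ C ≠ 0, ∀ᶠ r in 𝓝[>] (0 : ℝ), C * ENNReal.ofReal (r ^ s) ≤ μ (closedBall x r) := by
  constructor
  · intro h
    obtain ⟨C, hC, hCl⟩ := exists_between h
    refine ⟨C, hC.ne', ?_⟩
    filter_upwards [eventually_lt_of_lt_liminf hCl, self_mem_nhdsWithin] with r hr hr0
    exact (le_ballRatio_iff hr0).1 hr.le
  · rintro ⟨C, hC, h⟩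
    refine (pos_iff_ne_zero.2 hC).trans_le (le_liminf_of_le (h := ?_))
    filter_upwards [h, self_mem_nhdsWithin] with r hr hr0
    exact (le_ballRatio_iff hr0).2 hr

lemma upperDensity_mono (h : μ ≤ ν) : upperDensity μ s x ≤ upperDensity ν s x :=
  limsup_le_limsup (.of_forall fun _ => ENNReal.div_le_div_right (h _) _)

lemma lowerDensity_mono (h : μ ≤ ν) : lowerDensity μ s x ≤ lowerDensity ν s x :=
  liminf_le_liminf (.of_forall fun _ => ENNReal.div_le_div_right (h _) _)

lemma upperDensity_smul {c : ℝ≥0∞} (hc : c ≠ ⊤) :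
    upperDensity (c • μ) s x = c * upperDensity μ s x := by
  have hratio : ballRatio (c • μ) s x = fun r => c * ballRatio μ s x r :=
    funext fun _ => mul_div_assoc c _ _
  rw [upperDensity, hratio, ENNReal.limsup_const_mul_of_ne_top hc, upperDensity]

lemma upperDensity_smul_lt_top {c : ℝ≥0∞} (hc : c ≠ ⊤) (h : upperDensity μ s x < ⊤) :
    upperDensity (c • μ) s x < ⊤ :=
  (upperDensity_smul hc).trans_lt (ENNReal.mul_lt_top hc.lt_top h)

lemma lowerDensity_smul_pos {c : ℝ≥0∞} (hc : c ≠ 0) (h : 0 < lowerDensity μ s x) :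
    0 < lowerDensity (c • μ) s x := by
  obtain ⟨C, hC, hC_le⟩ := lowerDensity_pos_iff.1 h
  refine lowerDensity_pos_iff.2 ⟨c * C, mul_ne_zero hc hC, hC_le.mono fun r hr => ?_⟩
  rw [Measure.smul_apply, smul_eq_mul, mul_assoc]
  gcongr

lemma upperDensity_add_lt_top (hμ : upperDensity μ s x < ⊤) (hν : upperDensity ν s x < ⊤) :
    upperDensity (μ + ν) s x < ⊤ := by
  obtain ⟨C, hC, hμC⟩ := upperDensity_lt_top_iff.1 hμ
  obtain ⟨D, hD, hνD⟩ := upperDensity_lt_top_iff.1 hν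
  refine upperDensity_lt_top_iff.2 ⟨C + D, ENNReal.add_ne_top.2 ⟨hC, hD⟩, ?_⟩
  filter_upwards [hμC, hνD] with r hr hr'
  rw [Measure.add_apply, add_mul]
  exact add_le_add hr hr'

lemma upperDensity_zero_measure : upperDensity (0 : Measure X) s x = 0 := by
  simpa only [zero_smul, zero_mul] using
    upperDensity_smul (μ := (0 : Measure X)) (s := s) (x := x) ENNReal.zero_ne_top

lemma upperDensity_sum_lt_top {ι : Type*} {I : Finset ι} {μ : ι → Measure X}
    (h : ∀ i ∈ I, upperDensity (μ i) s x < ⊤) : upperDensity (∑ i ∈ I, μ i) s x < ⊤ :=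
  Finset.sum_induction μ (fun ν => upperDensity ν s x < ⊤) (fun _ _ => upperDensity_add_lt_top)
    (upperDensity_zero_measure.trans_lt ENNReal.zero_lt_top) h

lemma upperDensity_lt_top_of_le (hst : s ≤ t) (h : upperDensity μ t x < ⊤) :
    upperDensity μ s x < ⊤ := by
  obtain ⟨C, hC, hC_le⟩ := upperDensity_lt_top_iff.1 h
  refine upperDensity_lt_top_iff.2 ⟨C, hC, ?_⟩
  filter_upwards [hC_le, Ioo_mem_nhdsGT one_pos] with r hr hr01
  have hpow : r ^ t ≤ r ^ s := pow_le_pow_of_le_one hr01.1.le hr01.2.le hst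
  exact hr.trans (by gcongr)

lemma tendsto_ballRatio_nhds_top (hst : s < t) (h : 0 < lowerDensity μ s x) :
    Tendsto (ballRatio μ t x) (𝓝[>] 0) (𝓝 ⊤) := by
  obtain ⟨C, hC, hC_le⟩ := lowerDensity_pos_iff.1 h
  have hinv : Tendsto (fun r : ℝ => C * ENNReal.ofReal r⁻¹) (𝓝[>] 0) (𝓝 ⊤) :=
    ENNReal.mul_top hC ▸ ENNReal.Tendsto.const_mul
      (ENNReal.tendsto_ofReal_atTop.comp tendsto_inv_nhdsGT_zero) (.inl ENNReal.top_ne_zero)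
  refine tendsto_nhds_top_mono hinv ?_
  filter_upwards [hC_le, Ioo_mem_nhdsGT one_pos] with r hr hr01
  have hpow : r⁻¹ * r ^ t ≤ r ^ s := by
    rw [inv_mul_le_iff₀ hr01.1, ← pow_succ']
    exact pow_le_pow_of_le_one hr01.1.le hr01.2.le hst
  refine (le_ballRatio_iff hr01.1).2 ?_
  calc C * ENNReal.ofReal r⁻¹ * ENNReal.ofReal (r ^ t)
      = C * ENNReal.ofReal (r⁻¹ * r ^ t) := by
        rw [mul_assoc, ENNReal.ofReal_mul (inv_nonneg.2 hr01.1.le)]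
    _ ≤ C * ENNReal.ofReal (r ^ s) := by gcongr
    _ ≤ μ (closedBall x r) := hr

lemma upperDensity_eq_top (hst : s < t) (h : 0 < lowerDensity μ s x) : upperDensity μ t x = ⊤ :=
  (tendsto_ballRatio_nhds_top hst h).limsup_eq

lemma maxBoundedExponent_eq (hsd : s ≤ d) (hup : upperDensity μ s x < ⊤)
    (hlow : 0 < lowerDensity μ s x) : maxBoundedExponent μ d x = s :=
  IsGreatest.csSup_eq ⟨⟨hsd, hup⟩, fun _ ht =>
    not_lt.1 fun hst => ht.2.ne (upperDensity_eq_top hst hlow)⟩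

lemma maxBoundedExponent_eq_self (h : upperDensity μ d x < ⊤) : maxBoundedExponent μ d x = d :=
  IsGreatest.csSup_eq ⟨⟨le_rfl, h⟩, fun _ ht => ht.1⟩

lemma upperDensity_zero_lt_top [IsLocallyFiniteMeasure μ] : upperDensity μ 0 x < ⊤ := by
  obtain ⟨U, hU, hUtop⟩ := μ.finiteAt_nhds x
  refine upperDensity_lt_top_iff.2 ⟨μ U, hUtop.ne, ?_⟩
  filter_upwards [nhdsWithin_le_nhds (eventually_closedBall_subset hU)] with r hr
  simpa only [pow_zero, ENNReal.ofReal_one, mul_one] using measure_mono hr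

lemma lowerDensity_zero_pos (h : μ {x} ≠ 0) : 0 < lowerDensity μ 0 x := by
  refine lowerDensity_pos_iff.2 ⟨μ {x}, h, ?_⟩
  filter_upwards [self_mem_nhdsWithin] with r hr
  simpa only [pow_zero, ENNReal.ofReal_one, mul_one] using
    measure_mono (singleton_subset_iff.2 (mem_closedBall_self (le_of_lt hr)))

lemma upperDensity_lt_top_of_notMem {S : Set X} (hS : IsClosed S) (hμS : μ Sᶜ = 0)
    (hx : x ∉ S) : upperDensity μ s x < ⊤ := by
  refine upperDensity_lt_top_iff.2 ⟨0, ENNReal.zero_ne_top, ?_⟩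
  filter_upwards [nhdsWithin_le_nhds
    (eventually_closedBall_subset (hS.isOpen_compl.mem_nhds hx))] with r hr
  exact (measure_mono_null hr hμS).trans_le zero_le

lemma upperDensity_withDensity_lt_top {f : X → ℝ≥0∞} {C : ℝ≥0∞} (hC : C ≠ ⊤)
    (hf : ∀ᵐ y ∂μ, f y ≤ C) (h : upperDensity μ s x < ⊤) : upperDensity (μ.withDensity f) s x < ⊤ :=
  (upperDensity_mono (withDensity_const (μ := μ) C ▸ withDensity_mono hf)).trans_lt
    (upperDensity_smul_lt_top hC h)

lemma lowerDensity_withDensity_pos {f : X → ℝ≥0∞} {C : ℝ≥0∞} (hC : C ≠ 0)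
    (hf : ∀ᵐ y ∂μ, C ≤ f y) (h : 0 < lowerDensity μ s x) : 0 < lowerDensity (μ.withDensity f) s x :=
  (lowerDensity_smul_pos hC h).trans_le
    (lowerDensity_mono (withDensity_const (μ := μ) C ▸ withDensity_mono hf))

lemma upperDensity_mixture_lt_top {μ₀ μ₁ μ₂ : Measure X} {π₀ π₁ π₂ : ℝ≥0}
    (h₀ : upperDensity μ₀ s x < ⊤) (h₁ : upperDensity μ₁ s x < ⊤) (h₂ : upperDensity μ₂ s x < ⊤) :
    upperDensity ((π₀ : ℝ≥0∞) • μ₀ + (π₁ : ℝ≥0∞) • μ₁ + (π₂ : ℝ≥0∞) • μ₂) s x < ⊤ :=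
  upperDensity_add_lt_top
    (upperDensity_add_lt_top (upperDensity_smul_lt_top ENNReal.coe_ne_top h₀)
      (upperDensity_smul_lt_top ENNReal.coe_ne_top h₁))
    (upperDensity_smul_lt_top ENNReal.coe_ne_top h₂)

lemma lowerDensity_mixture_pos_fst {μ₀ μ₁ μ₂ : Measure X} {π₀ π₁ π₂ : ℝ≥0} (hπ₀ : 0 < π₀)
    (h : 0 < lowerDensity μ₀ s x) :
    0 < lowerDensity ((π₀ : ℝ≥0∞) • μ₀ + (π₁ : ℝ≥0∞) • μ₁ + (π₂ : ℝ≥0∞) • μ₂) s x :=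
  (lowerDensity_smul_pos (ENNReal.coe_pos.2 hπ₀).ne' h).trans_le
    (lowerDensity_mono (Measure.le_add_right (Measure.le_add_right le_rfl)))

lemma lowerDensity_mixture_pos_snd {μ₀ μ₁ μ₂ : Measure X} {π₀ π₁ π₂ : ℝ≥0} (hπ₁ : 0 < π₁)
    (h : 0 < lowerDensity μ₁ s x) :
    0 < lowerDensity ((π₀ : ℝ≥0∞) • μ₀ + (π₁ : ℝ≥0∞) • μ₁ + (π₂ : ℝ≥0∞) • μ₂) s x :=
  (lowerDensity_smul_pos (ENNReal.coe_pos.2 hπ₁).ne' h).trans_le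
    (lowerDensity_mono (Measure.le_add_right (Measure.le_add_left le_rfl)))

end Density

lemma tendsto_const_mul_nhdsGT_zero {K : ℝ} (hK : 0 < K) :
    Tendsto (K * ·) (𝓝[>] 0) (𝓝[>] 0) := by
  simpa only [mul_zero, id_eq] using
    TendstoNhdsWithinIoi.const_mul hK (tendsto_id (x := 𝓝[>] (0 : ℝ)))

section Map

variable {X Y : Type*} [PseudoMetricSpace X] [MeasurableSpace X] [PseudoMetricSpace Y]
  [MeasurableSpace Y] [OpensMeasurableSpace Y] {μ : Measure X} {g : X → Y} {s : ℕ} {K : ℝ} {x : X}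

lemma upperDensity_map_lt_top (hg : AEMeasurable g μ) (hK : 0 < K)
    (hdist : ∀ᵐ y ∂μ, K * dist y x ≤ dist (g y) (g x)) (h : upperDensity μ s x < ⊤) :
    upperDensity (μ.map g) s (g x) < ⊤ := by
  obtain ⟨C, hC, hC_le⟩ := upperDensity_lt_top_iff.1 h
  refine upperDensity_lt_top_iff.2
    ⟨C * ENNReal.ofReal (K⁻¹ ^ s), ENNReal.mul_ne_top hC ENNReal.ofReal_ne_top, ?_⟩
  have hscale := tendsto_const_mul_nhdsGT_zero (inv_pos.2 hK)
  filter_upwards [hscale.eventually hC_le] with r hr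
  have hball : g ⁻¹' closedBall (g x) r ≤ᵐ[μ] closedBall x (K⁻¹ * r) := by
    filter_upwards [hdist] with y hy hyr
    exact (le_inv_mul_iff₀ hK).2 (hy.trans hyr)
  calc μ.map g (closedBall (g x) r)
      = μ (g ⁻¹' closedBall (g x) r) :=
        Measure.map_apply_of_aemeasurable hg measurableSet_closedBall
    _ ≤ μ (closedBall x (K⁻¹ * r)) := measure_mono_ae hball
    _ ≤ C * ENNReal.ofReal ((K⁻¹ * r) ^ s) := hr
    _ = C * ENNReal.ofReal (K⁻¹ ^ s) * ENNReal.ofReal (r ^ s) := by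
        rw [mul_pow, ENNReal.ofReal_mul (by positivity), mul_assoc]

lemma lowerDensity_map_pos (hg : AEMeasurable g μ) (hK : 0 < K)
    (hdist : ∀ᵐ y ∂μ, dist (g y) (g x) ≤ K * dist y x) (h : 0 < lowerDensity μ s x) :
    0 < lowerDensity (μ.map g) s (g x) := by
  obtain ⟨C, hC, hC_le⟩ := lowerDensity_pos_iff.1 h
  refine lowerDensity_pos_iff.2 ⟨C * ENNReal.ofReal (K⁻¹ ^ s),
    mul_ne_zero hC (ofReal_pow_ne_zero (inv_pos.2 hK) s), ?_⟩
  have hscale := tendsto_const_mul_nhdsGT_zero (inv_pos.2 hK)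
  filter_upwards [hscale.eventually hC_le] with r hr
  have hball : closedBall x (K⁻¹ * r) ≤ᵐ[μ] g ⁻¹' closedBall (g x) r := by
    filter_upwards [hdist] with y hy hyr
    exact hy.trans ((le_inv_mul_iff₀ hK).1 hyr)
  calc C * ENNReal.ofReal (K⁻¹ ^ s) * ENNReal.ofReal (r ^ s)
      = C * ENNReal.ofReal ((K⁻¹ * r) ^ s) := by
        rw [mul_pow, ENNReal.ofReal_mul (by positivity), mul_assoc]
    _ ≤ μ (closedBall x (K⁻¹ * r)) := hr
    _ ≤ μ (g ⁻¹' closedBall (g x) r) := measure_mono_ae hball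
    _ = μ.map g (closedBall (g x) r) :=
        (Measure.map_apply_of_aemeasurable hg measurableSet_closedBall).symm

end Map

lemma upperDensity_addHaar_lt_top {E : Type*} [NormedAddCommGroup E] [NormedSpace ℝ E]
    [FiniteDimensional ℝ E] [MeasurableSpace E] [BorelSpace E] (ν : Measure E)
    [ν.IsAddHaarMeasure] (x : E) : upperDensity ν (Module.finrank ℝ E) x < ⊤ := by
  refine upperDensity_lt_top_iff.2 ⟨ν (ball 0 1), measure_ball_lt_top.ne, ?_⟩
  filter_upwards [self_mem_nhdsWithin] with r hr
  rw [ν.addHaar_closedBall x (le_of_lt hr), mul_comm]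

lemma lowerDensity_restrict_Icc_pos {a b t : ℝ} (hab : a < b) (ht : t ∈ Icc a b) :
    0 < lowerDensity (volume.restrict (Icc a b)) 1 t := by
  refine lowerDensity_pos_iff.2 ⟨1, one_ne_zero, ?_⟩
  filter_upwards [Ioo_mem_nhdsGT (sub_pos.2 hab)] with r ⟨hr0, hr⟩
  rw [Measure.restrict_apply measurableSet_closedBall, Real.closedBall_eq_Icc, Icc_inter_Icc,
    Real.volume_Icc, one_mul, pow_one]
  refine ENNReal.ofReal_le_ofReal (le_sub_iff_add_le.2 (le_min ?_ ?_))
  · rw [← le_sub_iff_add_le']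
    exact max_le (by linarith) (by linarith [ht.1])
  · rw [← le_sub_iff_add_le']
    exact max_le (by linarith [ht.2]) (by linarith)

lemma ae_withDensity_restrict_of_forall_mem {X : Type*} [MeasurableSpace X] {μ : Measure X}
    {I : Set X} {f : X → ℝ≥0∞} {p : X → Prop} (hI : MeasurableSet I) (hp : ∀ u ∈ I, p u) :
    ∀ᵐ u ∂(μ.restrict I).withDensity f, p u :=
  (withDensity_absolutelyContinuous _ _).ae_le (ae_restrict_of_forall_mem hI hp)

lemma aemeasurable_withDensity_restrict {X Y : Type*} [TopologicalSpace X] [MeasurableSpace X]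
    [OpensMeasurableSpace X] [TopologicalSpace Y] [MeasurableSpace Y] [BorelSpace Y]
    {μ : Measure X} {I : Set X} {f : X → ℝ≥0∞} {g : X → Y} (hI : MeasurableSet I)
    (hg : ContinuousOn g I) : AEMeasurable g ((μ.restrict I).withDensity f) :=
  (hg.aemeasurable hI).mono_ac (withDensity_absolutelyContinuous _ _)

lemma isClosed_image_Icc {X : Type*} [TopologicalSpace X] [T2Space X] {γ : ℝ → X} {a b : ℝ}
    (hγ : ContinuousOn γ (Icc a b)) : IsClosed (γ '' Icc a b) :=
  (isCompact_Icc.image_of_continuousOn hγ).isClosed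

section Curve

variable {E : Type*} [MetricSpace E] [MeasurableSpace E] [BorelSpace E]
  {γ : ℝ → E} {f : ℝ → ℝ≥0∞} {t : ℝ}

/-- The mass distribution on the curve `γ([0,1])` with density `f` in the parameter. Only the values
of `γ` and `f` on `[0,1]` matter; if `γ` is not measurable there, this is the zero measure. -/
noncomputable def curveMeasure (γ : ℝ → E) (f : ℝ → ℝ≥0∞) : Measure E :=
  ((volume.restrict (Icc (0 : ℝ) 1)).withDensity f).map γ

lemma curveMeasure_compl_image (hγ : ContinuousOn γ (Icc 0 1)) :
    curveMeasure γ f (γ '' Icc 0 1)ᶜ = 0 := by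
  rw [curveMeasure, Measure.map_apply_of_aemeasurable
    (aemeasurable_withDensity_restrict measurableSet_Icc hγ)
    (isClosed_image_Icc hγ).measurableSet.compl]
  exact measure_mono_null (fun _ hu => hu)
    (ae_withDensity_restrict_of_forall_mem (p := (γ · ∈ γ '' Icc 0 1)) measurableSet_Icc
      fun _ => mem_image_of_mem γ)

lemma upperDensity_curveMeasure_lt_top (hγ : ContinuousOn γ (Icc 0 1)) {c : ℝ} (hc : 0 < c)
    (hlow : ∀ u ∈ Icc (0 : ℝ) 1, ∀ v ∈ Icc (0 : ℝ) 1, c * dist u v ≤ dist (γ u) (γ v))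
    {C : ℝ≥0∞} (hC : C ≠ ⊤) (hf : ∀ u ∈ Icc (0 : ℝ) 1, f u ≤ C) (x : E) :
    upperDensity (curveMeasure γ f) 1 x < ⊤ := by
  by_cases hx : x ∈ γ '' Icc 0 1
  · obtain ⟨v, hv, rfl⟩ := hx
    have hvol : upperDensity (volume.restrict (Icc (0 : ℝ) 1)) 1 v < ⊤ :=
      (upperDensity_mono Measure.restrict_le_self).trans_lt
        (Module.finrank_self ℝ ▸ upperDensity_addHaar_lt_top volume v)
    exact upperDensity_map_lt_top (aemeasurable_withDensity_restrict measurableSet_Icc hγ) hc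
      (ae_withDensity_restrict_of_forall_mem measurableSet_Icc fun u hu => hlow u hu v hv)
      (upperDensity_withDensity_lt_top hC (ae_restrict_of_forall_mem measurableSet_Icc hf) hvol)
  · exact upperDensity_lt_top_of_notMem (isClosed_image_Icc hγ) (curveMeasure_compl_image hγ) hx

lemma lowerDensity_curveMeasure_pos (hγ : ContinuousOn γ (Icc 0 1)) {L : ℝ} (hL : 0 < L)
    (hup : ∀ u ∈ Icc (0 : ℝ) 1, dist (γ u) (γ t) ≤ L * dist u t)
    {C : ℝ≥0∞} (hC : C ≠ 0) (hf : ∀ u ∈ Icc (0 : ℝ) 1, C ≤ f u) (ht : t ∈ Icc (0 : ℝ) 1) :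
    0 < lowerDensity (curveMeasure γ f) 1 (γ t) :=
  lowerDensity_map_pos (aemeasurable_withDensity_restrict measurableSet_Icc hγ) hL
    (ae_withDensity_restrict_of_forall_mem measurableSet_Icc hup)
    (lowerDensity_withDensity_pos hC (ae_restrict_of_forall_mem measurableSet_Icc hf)
      (lowerDensity_restrict_Icc_pos zero_lt_one ht))

end Curve

section CurveFamily

variable {E ι : Type*} [MetricSpace E] [MeasurableSpace E] [BorelSpace E] [Fintype ι]
  {γ : ι → ℝ → E} {f : ι → ℝ → ℝ≥0∞}

lemma sum_curveMeasure_compl_iUnion_image (hγ : ∀ j, ContinuousOn (γ j) (Icc 0 1)) :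
    (∑ j, curveMeasure (γ j) (f j)) (⋃ j, γ j '' Icc 0 1)ᶜ = 0 := by
  rw [Measure.finsetSum_apply]
  exact Finset.sum_eq_zero fun j _ => measure_mono_null
    (compl_subset_compl.2 (subset_iUnion (fun j => γ j '' Icc 0 1) j))
    (curveMeasure_compl_image (hγ j))

lemma lowerDensity_sum_curveMeasure_pos (hγ : ∀ j, ContinuousOn (γ j) (Icc 0 1)) {L : ℝ}
    (hL : 0 < L)
    (hup : ∀ j, ∀ u ∈ Icc (0 : ℝ) 1, ∀ v ∈ Icc (0 : ℝ) 1, dist (γ j u) (γ j v) ≤ L * dist u v)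
    {C : ℝ≥0∞} (hC : C ≠ 0) (hf : ∀ j, ∀ u ∈ Icc (0 : ℝ) 1, C ≤ f j u) {x : E}
    (hx : x ∈ ⋃ j, γ j '' Icc 0 1) :
    0 < lowerDensity (∑ j, curveMeasure (γ j) (f j)) 1 x := by
  obtain ⟨j, t, ht, rfl⟩ := mem_iUnion.1 hx
  exact (lowerDensity_curveMeasure_pos (hγ j) hL (fun u hu => hup j u hu t ht) hC (hf j)
    ht).trans_le (lowerDensity_mono
      (Finset.single_le_sum (fun _ _ => Measure.zero_le _) (Finset.mem_univ j)))

end CurveFamily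

theorem dimension_eq_max_bounded_hausdorff_ratio_general
    {E ι : Type*} [NormedAddCommGroup E] [NormedSpace ℝ E]
    [MeasurableSpace E] [BorelSpace E] [Fintype ι]
    {d : ℕ} (hdim : Module.finrank ℝ E = d) (hd : 0 < d)
    {A : Set E} (hA : IsClosed A) {μ₀ : Measure E} [IsLocallyFiniteMeasure μ₀]
    (hμ₀supp : μ₀ Aᶜ = 0) (hμ₀atom : ∀ a ∈ A, μ₀ {a} ≠ 0)
    {c L : ℝ} (hc : 0 < c) (hL : 0 < L) {γ : ι → ℝ → E}
    (hγlow : ∀ j, ∀ s ∈ Icc (0 : ℝ) 1, ∀ t ∈ Icc (0 : ℝ) 1, c * |s - t| ≤ ‖γ j s - γ j t‖)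
    (hγup : ∀ j, ∀ s ∈ Icc (0 : ℝ) 1, ∀ t ∈ Icc (0 : ℝ) 1, ‖γ j s - γ j t‖ ≤ L * |s - t|)
    {R : Set E} (hR : R = ⋃ j, γ j '' Icc (0 : ℝ) 1)
    {a₀ A₀ : ℝ≥0} (ha₀ : 0 < a₀) {f : ι → ℝ → ℝ≥0∞}
    (hflow : ∀ j, ∀ t ∈ Icc (0 : ℝ) 1, a₀ ≤ f j t) (hfup : ∀ j, ∀ t ∈ Icc (0 : ℝ) 1, f j t ≤ A₀)
    (ν : Measure E) [ν.IsAddHaarMeasure] {p₂ : E → ℝ≥0∞} (hp₂ : ∀ x, p₂ x ≤ A₀)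
    {π₀ π₁ π₂ : ℝ≥0} (hπ₀ : 0 < π₀) (hπ₁ : 0 < π₁) {μ : Measure E}
    (hμ : μ = (π₀ : ℝ≥0∞) • μ₀ + (π₁ : ℝ≥0∞) • ∑ j, curveMeasure (γ j) (f j)
      + (π₂ : ℝ≥0∞) • ν.withDensity p₂) :
    (∀ x, (x ∈ A → 0 = maxBoundedExponent μ d x) ∧ (x ∈ R \ A → 1 = maxBoundedExponent μ d x) ∧
      (x ∉ A ∪ R → d = maxBoundedExponent μ d x)) ∧
    (∀ x ∈ A, ∀ s, 0 < s → Tendsto (ballRatio μ s x) (𝓝[>] 0) (𝓝 ⊤)) ∧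
    (∀ x ∈ R \ A, upperDensity μ 1 x < ⊤ ∧
      ∀ s, 1 < s → Tendsto (ballRatio μ s x) (𝓝[>] 0) (𝓝 ⊤)) ∧
    (∀ x ∉ A ∪ R, upperDensity μ d x < ⊤) := by
  have : FiniteDimensional ℝ E := .of_finrank_pos (hdim ▸ hd)
  simp only [← Real.norm_eq_abs, ← dist_eq_norm] at hγlow hγup
  have hγ (j) : ContinuousOn (γ j) (Icc 0 1) :=
    (LipschitzOnWith.of_dist_le' (hγup j)).continuousOn
  have hR_closed : IsClosed R := hR ▸ isClosed_iUnion_of_finite fun j => isClosed_image_Icc (hγ j)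
  have hμ₁_supp : (∑ j, curveMeasure (γ j) (f j)) Rᶜ = 0 :=
    hR ▸ sum_curveMeasure_compl_iUnion_image hγ
  have hμ₁_up (x) : upperDensity (∑ j, curveMeasure (γ j) (f j)) 1 x < ⊤ :=
    upperDensity_sum_lt_top fun j _ =>
      upperDensity_curveMeasure_lt_top (hγ j) hc (hγlow j) ENNReal.coe_ne_top (hfup j) x
  have hμ₂_up (x) : upperDensity (ν.withDensity p₂) d x < ⊤ :=
    upperDensity_withDensity_lt_top ENNReal.coe_ne_top (.of_forall hp₂)
      (hdim ▸ upperDensity_addHaar_lt_top ν x)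
  have hA_up (x) : upperDensity μ 0 x < ⊤ := hμ ▸ upperDensity_mixture_lt_top
    upperDensity_zero_lt_top (upperDensity_lt_top_of_le zero_le_one (hμ₁_up x))
    (upperDensity_lt_top_of_le hd.le (hμ₂_up x))
  have hA_low : ∀ x ∈ A, 0 < lowerDensity μ 0 x := fun x hx =>
    hμ ▸ lowerDensity_mixture_pos_fst hπ₀ (lowerDensity_zero_pos (hμ₀atom x hx))
  have hR_up : ∀ x ∈ R \ A, upperDensity μ 1 x < ⊤ := fun x hx =>
    hμ ▸ upperDensity_mixture_lt_top (upperDensity_lt_top_of_notMem hA hμ₀supp hx.2) (hμ₁_up x)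
      (upperDensity_lt_top_of_le hd (hμ₂_up x))
  have hR_low : ∀ x ∈ R \ A, 0 < lowerDensity μ 1 x := fun x hx =>
    hμ ▸ lowerDensity_mixture_pos_snd hπ₁ (lowerDensity_sum_curveMeasure_pos hγ hL hγup
      (ENNReal.coe_pos.2 ha₀).ne' hflow (hR ▸ hx.1))
  have hcompl_up : ∀ x ∉ A ∪ R, upperDensity μ d x < ⊤ := fun x hx =>
    hμ ▸ upperDensity_mixture_lt_top
      (upperDensity_lt_top_of_notMem hA hμ₀supp fun hxA => hx (.inl hxA))
      (upperDensity_lt_top_of_notMem hR_closed hμ₁_supp fun hxR => hx (.inr hxR)) (hμ₂_up x)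
  exact ⟨fun x => ⟨fun hx => (maxBoundedExponent_eq hd.le (hA_up x) (hA_low x hx)).symm,
      fun hx => (maxBoundedExponent_eq hd (hR_up x hx) (hR_low x hx)).symm,
      fun hx => (maxBoundedExponent_eq_self (hcompl_up x hx)).symm⟩,
    fun x hx _ hs => tendsto_ballRatio_nhds_top hs (hA_low x hx),
    fun x hx => ⟨hR_up x hx, fun _ hs => tendsto_ballRatio_nhds_top hs (hR_low x hx)⟩,
    hcompl_up⟩

/-- with `ω(x) = 0` for `x ∈ A`, `ω(x) = 1` for `x ∈ R \ A` and
`ω(x) = 2` for `x ∉ A ∪ R`, one has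
`ω(x) = max{s ∈ {0,1,2} : limsup_{r→0⁺} μ(B̄(x,r))/r^s < ∞}` for every `x`.
Equivalently: for `x ∈ A` the ratios with `s = 1, 2` diverge; for `x ∈ R \ A`
the ratio with `s = 1` stays bounded while the ratio with `s = 2` diverges; and
for `x ∉ A ∪ R` the ratio with `s = 2` stays bounded. -/
theorem dimension_eq_max_bounded_hausdorff_ratio
    (a₀ A₀ c L π₀ π₁ π₂ : ℝ)
    (ha₀ : 0 < a₀) (ha₀A₀ : a₀ ≤ A₀) (hc : 0 < c) (hcL : c ≤ L)
    (hπ₀ : 0 < π₀) (hπ₁ : 0 < π₁) (hπ₂ : 0 < π₂) (hπsum : π₀ + π₁ + π₂ = 1)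
    (A : Set (EuclideanSpace ℝ (Fin 2))) (hAfin : A.Finite) (hAne : A.Nonempty)
    (μ₀ : Measure (EuclideanSpace ℝ (Fin 2))) [IsProbabilityMeasure μ₀]
    (hμ₀supp : μ₀ Aᶜ = 0)
    (hμ₀atom : ∀ a ∈ A, ENNReal.ofReal a₀ ≤ μ₀ {a})
    (k : ℕ) (γ : Fin k → ℝ → EuclideanSpace ℝ (Fin 2))
    (hγmeas : ∀ j, Measurable (γ j))
    (hγlow : ∀ j, ∀ s ∈ Icc (0:ℝ) 1, ∀ t ∈ Icc (0:ℝ) 1, c * |s - t| ≤ ‖γ j s - γ j t‖)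
    (hγup : ∀ j, ∀ s ∈ Icc (0:ℝ) 1, ∀ t ∈ Icc (0:ℝ) 1, ‖γ j s - γ j t‖ ≤ L * |s - t|)
    (R : Set (EuclideanSpace ℝ (Fin 2))) (hR : R = ⋃ j, γ j '' Icc (0:ℝ) 1)
    (hAR : A ⊆ R)
    (f : Fin k → ℝ → ℝ) (hfmeas : ∀ j, Measurable (f j))
    (hflow : ∀ j, ∀ t ∈ Icc (0:ℝ) 1, a₀ ≤ f j t)
    (hfup : ∀ j, ∀ t ∈ Icc (0:ℝ) 1, f j t ≤ A₀)
    (μ₁ : Measure (EuclideanSpace ℝ (Fin 2))) [IsProbabilityMeasure μ₁]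
    (hμ₁ : μ₁ = ∑ j : Fin k, Measure.map (γ j)
      ((volume.restrict (Icc (0:ℝ) 1)).withDensity fun t => ENNReal.ofReal (f j t)))
    (p₂ : EuclideanSpace ℝ (Fin 2) → ℝ) (hp₂meas : Measurable p₂)
    (hp₂low : ∀ x, 0 ≤ p₂ x) (hp₂up : ∀ x, p₂ x ≤ A₀)
    (μ₂ : Measure (EuclideanSpace ℝ (Fin 2))) [IsProbabilityMeasure μ₂]
    (hμ₂ : μ₂ = volume.withDensity fun x => ENNReal.ofReal (p₂ x))
    (μ : Measure (EuclideanSpace ℝ (Fin 2)))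
    (hμ : μ = ENNReal.ofReal π₀ • μ₀ + ENNReal.ofReal π₁ • μ₁ + ENNReal.ofReal π₂ • μ₂)
    :
    (∀ x : EuclideanSpace ℝ (Fin 2),
      (x ∈ A → 0 = sSup {s : ℕ | s ≤ 2 ∧
          Filter.limsup (fun r : ℝ => μ (closedBall x r) / ENNReal.ofReal (r ^ s))
            (𝓝[>] (0:ℝ)) < ⊤}) ∧
      (x ∈ R \ A → 1 = sSup {s : ℕ | s ≤ 2 ∧
          Filter.limsup (fun r : ℝ => μ (closedBall x r) / ENNReal.ofReal (r ^ s))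
            (𝓝[>] (0:ℝ)) < ⊤}) ∧
      (x ∉ A ∪ R → 2 = sSup {s : ℕ | s ≤ 2 ∧
          Filter.limsup (fun r : ℝ => μ (closedBall x r) / ENNReal.ofReal (r ^ s))
            (𝓝[>] (0:ℝ)) < ⊤})) ∧
    (∀ x ∈ A,
      Tendsto (fun r : ℝ => μ (closedBall x r) / ENNReal.ofReal (r ^ 1))
        (𝓝[>] (0:ℝ)) (𝓝 ⊤) ∧
      Tendsto (fun r : ℝ => μ (closedBall x r) / ENNReal.ofReal (r ^ 2))
        (𝓝[>] (0:ℝ)) (𝓝 ⊤)) ∧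
    (∀ x ∈ R \ A,
      Filter.limsup (fun r : ℝ => μ (closedBall x r) / ENNReal.ofReal (r ^ 1))
        (𝓝[>] (0:ℝ)) < ⊤ ∧
      Tendsto (fun r : ℝ => μ (closedBall x r) / ENNReal.ofReal (r ^ 2))
        (𝓝[>] (0:ℝ)) (𝓝 ⊤)) ∧
    (∀ x ∉ A ∪ R,
      Filter.limsup (fun r : ℝ => μ (closedBall x r) / ENNReal.ofReal (r ^ 2))
        (𝓝[>] (0:ℝ)) < ⊤) := by
  subst hμ₁ hμ₂
  obtain ⟨hdim, hA, hRA, hcompl⟩ := dimension_eq_max_bounded_hausdorff_ratio_general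
    finrank_euclideanSpace_fin two_pos hAfin.isClosed hμ₀supp
    (fun a ha => ((ENNReal.ofReal_pos.2 ha₀).trans_le (hμ₀atom a ha)).ne') hc (hc.trans_le hcL)
    hγlow hγup hR (Real.toNNReal_pos.2 ha₀)
    (fun j t ht => ENNReal.ofReal_le_ofReal (hflow j t ht))
    (fun j t ht => ENNReal.ofReal_le_ofReal (hfup j t ht)) volume
    (fun x => ENNReal.ofReal_le_ofReal (hp₂up x)) (Real.toNNReal_pos.2 hπ₀)
    (Real.toNNReal_pos.2 hπ₁) hμ
  exact ⟨hdim, fun x hx => ⟨hA x hx 1 one_pos, hA x hx 2 two_pos⟩,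
    fun x hx => ⟨(hRA x hx).1, (hRA x hx).2 2 one_lt_two⟩, hcompl⟩
end

section
/- Let μ be a probability measure on ℝ² and x ∈ ℝ². If μ(closedBall(x,r))/r² → ∞ as r → 0⁺, then (1/h²)·∫ K(‖x − y‖/h) dμ(y) → ∞ as h → 0⁺. -/
/-!
A kernel that is at least `c` on `[0, a]` gives an expected estimator of bandwidth `h` at least
`c / h ^ s * μ (closedBall x (a * h)) = c * a ^ s * (μ (closedBall x r) / r ^ s)` with `r = a * h`,
that is, a positive multiple of the density ratio at a radius proportional to the bandwidth.
A kernel that is nonincreasing on `[0, 1]` and positive at `1 / 2` is such a kernel, with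
`a = 1 / 2` and `c = K (1 / 2)`.
-/

open MeasureTheory Filter Metric Set Topology
open scoped ENNReal

theorem mul_measure_closedBall_le_lintegral_kernel {X : Type*} [PseudoMetricSpace X]
    [MeasurableSpace X] [OpensMeasurableSpace X] {K : ℝ → ℝ≥0∞} {a : ℝ} {c : ℝ≥0∞}
    (hK : ∀ t ∈ Icc 0 a, c ≤ K t) (μ : Measure X) (x : X) {h : ℝ} (hh : 0 < h) :
    c * μ (closedBall x (a * h)) ≤ ∫⁻ y, K (dist x y / h) ∂μ := by
  have kernel_ge : ∀ y ∈ closedBall x (a * h), c ≤ K (dist x y / h) := fun y hy =>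
    hK _ ⟨by positivity, (div_le_iff₀ hh).2 (mem_closedBall'.1 hy)⟩
  calc c * μ (closedBall x (a * h))
      ≤ (⨅ y ∈ closedBall x (a * h), K (dist x y / h)) * μ (closedBall x (a * h)) := by
        gcongr
        exact le_iInf₂ kernel_ge
    _ ≤ ∫⁻ y in closedBall x (a * h), K (dist x y / h) ∂μ :=
        iInf_mul_le_setLIntegral _ measurableSet_closedBall
    _ ≤ ∫⁻ y, K (dist x y / h) ∂μ := setLIntegral_le_lintegral _ _

theorem ofReal_one_div_rpow_mul_eq_mul_div_ofReal_rpow {a h : ℝ} (ha : 0 < a) (hh : 0 < h)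
    (s : ℝ) (m : ℝ≥0∞) :
    ENNReal.ofReal (1 / h ^ s) * m =
      ENNReal.ofReal (a ^ s) * (m / ENNReal.ofReal ((a * h) ^ s)) := by
  have scale : 1 / h ^ s = a ^ s * ((a * h) ^ s)⁻¹ := by
    rw [Real.mul_rpow ha.le hh.le]
    field_simp
  rw [scale, ENNReal.ofReal_mul (by positivity), ENNReal.ofReal_inv_of_pos (by positivity),
    mul_assoc, mul_comm _ m, div_eq_mul_inv]

theorem tendsto_ofReal_one_div_rpow_mul_comp_const_mul {f : ℝ → ℝ≥0∞} {a s : ℝ} (ha : 0 < a)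
    (hf : Tendsto (fun r => f r / ENNReal.ofReal (r ^ s)) (𝓝[>] 0) (𝓝 ⊤)) :
    Tendsto (fun h => ENNReal.ofReal (1 / h ^ s) * f (a * h)) (𝓝[>] 0) (𝓝 ⊤) := by
  have rescale : Tendsto (a * ·) (𝓝[>] 0) (𝓝[>] 0) :=
    tendsto_iff_comap.2 (comap_mulLeft_nhdsGT_zero ha).ge
  have factor_ne_zero : ENNReal.ofReal (a ^ s) ≠ 0 :=
    (ENNReal.ofReal_pos.2 (Real.rpow_pos_of_pos ha s)).ne'
  have scaled := ENNReal.Tendsto.const_mul (a := ENNReal.ofReal (a ^ s)) (hf.comp rescale)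
    (.inl ENNReal.top_ne_zero)
  rw [ENNReal.mul_top factor_ne_zero] at scaled
  refine scaled.congr' ?_
  filter_upwards [self_mem_nhdsWithin] with h hh
  exact (ofReal_one_div_rpow_mul_eq_mul_div_ofReal_rpow ha hh s _).symm

theorem kde_expectation_diverges_of_infinite_two_dim_density_general {X : Type*}
    [PseudoMetricSpace X] [MeasurableSpace X] [OpensMeasurableSpace X] {K : ℝ → ℝ≥0∞} {a s : ℝ}
    {c : ℝ≥0∞} (ha : 0 < a) (hc : c ≠ 0) (hK : ∀ t ∈ Icc 0 a, c ≤ K t) (μ : Measure X) (x : X)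
    (hx : Tendsto (fun r : ℝ => μ (closedBall x r) / ENNReal.ofReal (r ^ s))
      (𝓝[>] 0) (𝓝 ⊤)) :
    Tendsto (fun h : ℝ => ENNReal.ofReal (1 / h ^ s) * ∫⁻ y, K (dist x y / h) ∂μ)
      (𝓝[>] 0) (𝓝 ⊤) := by
  have lower_bound_tendsto := ENNReal.Tendsto.const_mul (a := c)
    (tendsto_ofReal_one_div_rpow_mul_comp_const_mul ha hx) (.inl ENNReal.top_ne_zero)
  rw [ENNReal.mul_top hc] at lower_bound_tendsto
  refine tendsto_nhds_top_mono lower_bound_tendsto ?_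
  filter_upwards [self_mem_nhdsWithin] with h hh
  rw [mul_left_comm]
  gcongr
  exact mul_measure_closedBall_le_lintegral_kernel hK μ x hh

/-- if `μ(closedBall(x,r))/r² → ∞` as `r → 0⁺`, then the expected KDE
`(1/h²)·∫ K(‖x − y‖/h) dμ(y) → ∞` as `h → 0⁺`. -/
theorem kde_expectation_diverges_of_infinite_two_dim_density
    (K : ℝ → ℝ) (hK0 : ∀ t, 0 ≤ K t)
    (hKmono : ∀ s ∈ Icc (0:ℝ) 1, ∀ t ∈ Icc (0:ℝ) 1, s ≤ t → K t ≤ K s)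
    (hK1 : ∀ t : ℝ, 1 < t → K t = 0) (hKhalf : 0 < K (1/2))
    (μ : Measure (EuclideanSpace ℝ (Fin 2))) [IsProbabilityMeasure μ]
    (x : EuclideanSpace ℝ (Fin 2))
    (hx : Tendsto (fun r : ℝ => μ (closedBall x r) / ENNReal.ofReal (r ^ 2))
      (𝓝[>] (0:ℝ)) (𝓝 ⊤)) :
    Tendsto (fun h : ℝ =>
        ENNReal.ofReal (1 / h ^ 2) * ∫⁻ y, ENNReal.ofReal (K (‖x - y‖ / h)) ∂μ)
      (𝓝[>] (0:ℝ)) (𝓝 ⊤) := by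
  have kernel_ge : ∀ t ∈ Icc (0:ℝ) (1/2), ENNReal.ofReal (K (1/2)) ≤ ENNReal.ofReal (K t) :=
    fun t ht => ENNReal.ofReal_le_ofReal <|
      hKmono t ⟨ht.1, ht.2.trans (by norm_num)⟩ (1/2) (by norm_num) ht.2
  simpa only [dist_eq_norm, Real.rpow_two] using
    kde_expectation_diverges_of_infinite_two_dim_density_general (s := 2) one_half_pos
      (ENNReal.ofReal_pos.2 hKhalf).ne' kernel_ge μ x (by simpa only [Real.rpow_two] using hx)
end

section
/- Let L > 0 and let γ : [0,1] → ℝ² be L-Lipschitz. Let f : [0,1] → ℝ be measurable with f(t) ≥ a₀ > 0 for all t ∈ [0,1], let λ be Lebesgue measure on [0,1], and let ν = γ_*(f·λ) be the pushforward of the measure with density f. Then for every t₀ ∈ [0,1] and every r with 0 < r ≤ L/2, ν(closedBall(γ(t₀), r)) ≥ a₀·r/L. Consequently ν(closedBall(γ(t₀), r))/r² → ∞ as r → 0⁺. -/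
/-!
The `L`-Lipschitz curve maps the set `J` of parameters within `r / L` of `t₀` into the closed ball
of radius `r` about `γ t₀`. Even if `t₀` is an endpoint, `J` has length at least `r / L`, as long as
`r / L` is at most the length of the parameter interval. As the density is at least `a₀` on `J`,
the ball has mass at least `a₀ * r / L`; dividing by `r ^ 2` leaves at least `(a₀ / L) * r⁻¹`, which
is unbounded as `r → 0⁺`.
-/

open MeasureTheory Filter Metric Set Topology

theorem const_smul_le_withDensity {α : Type*} [MeasurableSpace α] {μ : Measure α} {c : ENNReal}
    {g : α → ENNReal} (hg : ∀ᵐ x ∂μ, c ≤ g x) : c • μ ≤ μ.withDensity g :=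
  withDensity_const (μ := μ) c ▸ withDensity_mono hg

theorem ofReal_le_volume_closedBall_inter_Icc {a b t d : ℝ} (ht : t ∈ Icc a b) (hd : 0 ≤ d)
    (hdab : d ≤ b - a) : ENNReal.ofReal d ≤ volume (closedBall t d ∩ Icc a b) := by
  obtain ⟨hat, htb⟩ := ht
  rw [Real.closedBall_eq_Icc, Icc_inter_Icc, Real.volume_Icc]
  have hlength : d + max (t - d) a ≤ min (t + d) b := by grind
  exact ENNReal.ofReal_le_ofReal (le_sub_iff_add_le.2 hlength)

theorem measure_closedBall_inter_le_map_closedBall {T X : Type*} [PseudoMetricSpace T]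
    [MeasurableSpace T] [PseudoMetricSpace X] [MeasurableSpace X] {μ : Measure T} {γ : T → X}
    {K : NNReal} {s : Set T} {t : T} (hγ : LipschitzOnWith K γ s) (hγμ : AEMeasurable γ μ)
    (ht : t ∈ s) (d : ℝ) :
    μ (closedBall t d ∩ s) ≤ μ.map γ (closedBall (γ t) (K * d)) := by
  have hmaps : closedBall t d ∩ s ⊆ γ ⁻¹' closedBall (γ t) (K * d) := fun u ⟨hud, hus⟩ =>
    (hγ.dist_le_mul u hus t ht).trans (mul_le_mul_of_nonneg_left hud K.coe_nonneg)
  exact (measure_mono hmaps).trans (Measure.le_map_apply hγμ _)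

theorem tendsto_div_ofReal_pow_nhds_top {φ : ℝ → ENNReal} {c : ℝ} {m n : ℕ} (hc : 0 < c)
    (hmn : m < n) (hφ : ∀ᶠ r in 𝓝[>] (0 : ℝ), ENNReal.ofReal (c * r ^ m) ≤ φ r) :
    Tendsto (fun r : ℝ => φ r / ENNReal.ofReal (r ^ n)) (𝓝[>] (0 : ℝ)) (𝓝 ⊤) := by
  have hlim : Tendsto (fun r : ℝ => ENNReal.ofReal (c * r⁻¹ ^ (n - m))) (𝓝[>] 0) (𝓝 ⊤) :=
    ENNReal.tendsto_ofReal_atTop.comp <| Tendsto.const_mul_atTop hc <|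
      (tendsto_pow_atTop (Nat.sub_ne_zero_of_lt hmn)).comp tendsto_inv_nhdsGT_zero
  refine tendsto_nhds_top_mono hlim ?_
  filter_upwards [hφ, self_mem_nhdsWithin] with r hr hr0
  rw [mem_Ioi] at hr0
  calc ENNReal.ofReal (c * r⁻¹ ^ (n - m))
      = ENNReal.ofReal (c * r ^ m / r ^ n) := by
        rw [inv_pow, pow_sub₀ r hr0.ne' hmn.le]
        field_simp
    _ = ENNReal.ofReal (c * r ^ m) / ENNReal.ofReal (r ^ n) :=
        ENNReal.ofReal_div_of_pos (pow_pos hr0 n)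
    _ ≤ φ r / ENNReal.ofReal (r ^ n) := ENNReal.div_le_div_right hr _

section LipschitzCurve

variable {X : Type*} [PseudoMetricSpace X] [MeasurableSpace X] [BorelSpace X]
  {a b L a₀ : ℝ} {γ : ℝ → X} {f : ℝ → ℝ}

theorem ofReal_mul_div_le_map_withDensity_closedBall (hL : 0 < L)
    (hγ : LipschitzOnWith (Real.toNNReal L) γ (Icc a b))
    (hfa : ∀ᵐ t ∂volume.restrict (Icc a b), a₀ ≤ f t) {t₀ : ℝ} (ht₀ : t₀ ∈ Icc a b) {r : ℝ}
    (hr : 0 ≤ r) (hrL : r ≤ L * (b - a)) :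
    ENNReal.ofReal (a₀ * r / L) ≤
      Measure.map γ ((volume.restrict (Icc a b)).withDensity fun t => ENNReal.ofReal (f t))
        (closedBall (γ t₀) r) := by
  set μ := (volume.restrict (Icc a b)).withDensity fun t => ENNReal.ofReal (f t)
  set J := closedBall t₀ (r / L) ∩ Icc a b
  have hd : 0 ≤ r / L := by positivity
  have hγμ : AEMeasurable γ μ := (hγ.continuousOn.aemeasurable measurableSet_Icc).mono_ac
    (withDensity_absolutelyContinuous _ _)
  have hμ : ENNReal.ofReal a₀ • volume.restrict (Icc a b) ≤ μ :=
    const_smul_le_withDensity (hfa.mono fun _ => ENNReal.ofReal_le_ofReal)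
  have hball : μ J ≤ μ.map γ (closedBall (γ t₀) r) := by
    simpa [hL.le, mul_div_cancel₀ r hL.ne'] using
      measure_closedBall_inter_le_map_closedBall hγ hγμ ht₀ (r / L)
  calc ENNReal.ofReal (a₀ * r / L)
      = ENNReal.ofReal a₀ * ENNReal.ofReal (r / L) := by rw [mul_div_assoc, ENNReal.ofReal_mul' hd]
    _ ≤ ENNReal.ofReal a₀ * volume J := by
        gcongr
        exact ofReal_le_volume_closedBall_inter_Icc ht₀ hd ((div_le_iff₀' hL).2 hrL)
    _ = (ENNReal.ofReal a₀ • volume.restrict (Icc a b)) J := by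
        rw [Measure.smul_apply, smul_eq_mul, Measure.restrict_eq_self _ inter_subset_right]
    _ ≤ μ J := hμ J
    _ ≤ μ.map γ (closedBall (γ t₀) r) := hball

theorem pushforward_curve_measure_ball_lower_bound_general (hab : a < b) (hL : 0 < L)
    (ha₀ : 0 < a₀) (hγ : LipschitzOnWith (Real.toNNReal L) γ (Icc a b))
    (hfa : ∀ᵐ t ∂volume.restrict (Icc a b), a₀ ≤ f t) {ν : Measure X}
    (hν : ν = Measure.map γ ((volume.restrict (Icc a b)).withDensity
      fun t => ENNReal.ofReal (f t))) :
    (∀ t₀ ∈ Icc a b, ∀ r : ℝ, 0 ≤ r → r ≤ L * (b - a) →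
        ENNReal.ofReal (a₀ * r / L) ≤ ν (closedBall (γ t₀) r)) ∧
    (∀ t₀ ∈ Icc a b, ∀ n : ℕ, 1 < n →
        Tendsto (fun r : ℝ => ν (closedBall (γ t₀) r) / ENNReal.ofReal (r ^ n))
          (𝓝[>] (0 : ℝ)) (𝓝 ⊤)) := by
  subst hν
  refine ⟨fun t₀ ht₀ r => ofReal_mul_div_le_map_withDensity_closedBall hL hγ hfa ht₀,
    fun t₀ ht₀ n hn => tendsto_div_ofReal_pow_nhds_top (m := 1) (div_pos ha₀ hL) hn ?_⟩
  filter_upwards [Ioc_mem_nhdsGT (mul_pos hL (sub_pos.2 hab))] with r ⟨hr, hrL⟩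
  simpa only [pow_one, div_mul_eq_mul_div] using
    ofReal_mul_div_le_map_withDensity_closedBall hL hγ hfa ht₀ hr.le hrL

end LipschitzCurve

/-- for a Lipschitz curve `γ` and `ν = γ_*(f·λ)` with `f ≥ a₀ > 0`,
`ν(closedBall(γ(t₀), r)) ≥ a₀·r/L` for `0 < r ≤ L/2`, and consequently
`ν(closedBall(γ(t₀), r))/r² → ∞` as `r → 0⁺`. -/
theorem pushforward_curve_measure_ball_lower_bound
    (L a₀ : ℝ) (hL : 0 < L) (ha₀ : 0 < a₀)
    (γ : ℝ → EuclideanSpace ℝ (Fin 2))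
    (hγ : LipschitzOnWith (Real.toNNReal L) γ (Icc 0 1))
    (hγm : Measurable γ)
    (f : ℝ → ℝ) (hf : Measurable f) (hfa : ∀ t ∈ Icc (0:ℝ) 1, a₀ ≤ f t)
    (ν : Measure (EuclideanSpace ℝ (Fin 2)))
    (hν : ν = Measure.map γ ((volume.restrict (Icc (0:ℝ) 1)).withDensity
      fun t => ENNReal.ofReal (f t))) :
    (∀ t₀ ∈ Icc (0:ℝ) 1, ∀ r : ℝ, 0 < r → r ≤ L / 2 →
        ENNReal.ofReal (a₀ * r / L) ≤ ν (closedBall (γ t₀) r)) ∧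
    (∀ t₀ ∈ Icc (0:ℝ) 1,
        Tendsto (fun r : ℝ => ν (closedBall (γ t₀) r) / ENNReal.ofReal (r ^ 2))
          (𝓝[>] (0:ℝ)) (𝓝 ⊤)) := by
  obtain ⟨lower, limit⟩ := pushforward_curve_measure_ball_lower_bound_general zero_lt_one hL ha₀ hγ
    (ae_restrict_of_forall_mem measurableSet_Icc hfa) hν
  exact ⟨fun t₀ ht₀ r hr hrL => lower t₀ ht₀ r hr.le (by linarith),
    fun t₀ ht₀ => limit t₀ ht₀ 2 one_lt_two⟩
end

section
/- For every x ∈ R \ A the following three properties hold: (i) μ({x}) = 0; (ii) limsup_{r→0⁺} μ(closedBall(x,r))/(2r) ≤ π₁·k·A₀/c < ∞; and (iii) μ(closedBall(x,r))/(π·r²) → ∞ as r → 0⁺. That is, points on a road that are not anchor points have finite positive-bounded one-dimensional Hausdorff density behavior, carry no atom, and have infinite two-dimensional Hausdorff density. -/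
open MeasureTheory Filter Metric Set Topology

/-!
At a point of a road off the anchor set, `μ` is one-dimensional: its upper linear density
`limsup μ(B̄(x, r)) / 2r` is finite and its lower linear density is positive. The upper density
is subadditive in the measure; it vanishes for the anchors, which miss small balls, and for the
planar component, whose mass `O(r²)` is negligible against `r`. A road satisfying
`c|s - t| ≤ ‖γ s - γ t‖` spends a parameter time at most `2r/c` in a ball of radius `r`, so it
contributes at most `A₀/c`. Conversely the Lipschitz bound keeps the road in `B̄(γ s, r)` for a
parameter time at least `r/L`. Finite upper density excludes an atom, and positive lower density
makes `μ(B̄(x, r)) / r²` blow up like `1/r`.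
-/

open Module
open scoped ENNReal NNReal

theorem limsup_ennreal_add_le {ι : Type*} {l : Filter ι} (u v : ι → ℝ≥0∞) :
    limsup (fun i => u i + v i) l ≤ limsup u l + limsup v l := by
  refine ENNReal.le_of_forall_pos_le_add fun ε hε hfin => ?_
  obtain ⟨hu, hv⟩ := ENNReal.add_ne_top.1 hfin.ne
  have hε' : (ε / 2 : ℝ≥0∞) ≠ 0 := by simpa using hε.ne'
  refine limsup_le_of_le (by isBoundedDefault) ?_
  filter_upwards [eventually_lt_of_limsup_lt (ENNReal.lt_add_right hu hε'),
    eventually_lt_of_limsup_lt (ENNReal.lt_add_right hv hε')] with i hui hvi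
  calc u i + v i ≤ (limsup u l + ε / 2) + (limsup v l + ε / 2) := add_le_add hui.le hvi.le
    _ = limsup u l + limsup v l + ε := by rw [add_add_add_comm, ENNReal.add_halves]

theorem tendsto_ofReal_const_mul_pow_div_two_mul (C : ℝ) {d : ℕ} (hd : 1 < d) :
    Tendsto (fun r : ℝ => ENNReal.ofReal (C * r ^ d) / ENNReal.ofReal (2 * r)) (𝓝[>] 0) (𝓝 0) := by
  obtain ⟨m, rfl⟩ := Nat.exists_eq_add_of_lt hd
  have hlim : Tendsto (fun r : ℝ => ENNReal.ofReal (C / 2 * r ^ (m + 1))) (𝓝[>] 0) (𝓝 0) := by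
    have hcont : Continuous fun r : ℝ => ENNReal.ofReal (C / 2 * r ^ (m + 1)) :=
      ENNReal.continuous_ofReal.comp (by fun_prop)
    simpa using (hcont.tendsto 0).mono_left nhdsWithin_le_nhds
  refine hlim.congr' ?_
  filter_upwards [self_mem_nhdsWithin] with r (hr : 0 < r)
  rw [← ENNReal.ofReal_div_of_pos (by positivity)]
  congr 1
  field_simp
  ring

section LinearDensity

variable {X : Type*} [PseudoMetricSpace X] [MeasurableSpace X] {μ ν : Measure X} {x : X}

/-- The upper one-dimensional density `Θ*¹(μ, x)`, normalised so that Lebesgue measure on `ℝ` has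
density one. -/
noncomputable def upperLinearDensity (μ : Measure X) (x : X) : ℝ≥0∞ :=
  limsup (fun r : ℝ => μ (closedBall x r) / ENNReal.ofReal (2 * r)) (𝓝[>] 0)

/-- The lower one-dimensional density `Θ_*¹(μ, x)`, with the same normalisation as
`upperLinearDensity`. -/
noncomputable def lowerLinearDensity (μ : Measure X) (x : X) : ℝ≥0∞ :=
  liminf (fun r : ℝ => μ (closedBall x r) / ENNReal.ofReal (2 * r)) (𝓝[>] 0)

theorem upperLinearDensity_mono (h : μ ≤ ν) : upperLinearDensity μ x ≤ upperLinearDensity ν x :=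
  limsup_le_limsup (.of_forall fun _ => ENNReal.div_le_div_right (h _) _)

theorem lowerLinearDensity_mono (h : μ ≤ ν) : lowerLinearDensity μ x ≤ lowerLinearDensity ν x :=
  liminf_le_liminf (.of_forall fun _ => ENNReal.div_le_div_right (h _) _)

theorem upperLinearDensity_smul {a : ℝ≥0∞} (ha : a ≠ ∞) :
    upperLinearDensity (a • μ) x = a * upperLinearDensity μ x := by
  simp only [upperLinearDensity, Measure.smul_apply, smul_eq_mul, mul_div_assoc,
    ENNReal.limsup_const_mul_of_ne_top ha]

theorem lowerLinearDensity_smul {a : ℝ≥0∞} (ha : a ≠ ∞) :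
    lowerLinearDensity (a • μ) x = a * lowerLinearDensity μ x := by
  simp only [lowerLinearDensity, Measure.smul_apply, smul_eq_mul, mul_div_assoc,
    ENNReal.liminf_const_mul_of_ne_top ha]

theorem upperLinearDensity_add_le :
    upperLinearDensity (μ + ν) x ≤ upperLinearDensity μ x + upperLinearDensity ν x := by
  simp only [upperLinearDensity, Measure.add_apply, ENNReal.add_div]
  exact limsup_ennreal_add_le _ _

theorem upperLinearDensity_withDensity_eq_zero (hν : upperLinearDensity ν x = 0)
    {f : X → ℝ≥0∞} {M : ℝ≥0∞} (hM : M ≠ ∞) (hf : ∀ y, f y ≤ M) :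
    upperLinearDensity (ν.withDensity f) x = 0 := by
  refine le_zero_iff.1 ?_
  calc upperLinearDensity (ν.withDensity f) x
      ≤ upperLinearDensity (M • ν) x := by
        rw [← withDensity_const]
        exact upperLinearDensity_mono (withDensity_mono (.of_forall hf))
    _ = 0 := by rw [upperLinearDensity_smul hM, hν, mul_zero]

theorem upperLinearDensity_mixture_le {a b c : ℝ≥0∞} {μ₀ μ₁ μ₂ : Measure X}
    (ha : a ≠ ∞) (hb : b ≠ ∞) (hc : c ≠ ∞)
    (h₀ : upperLinearDensity μ₀ x = 0) (h₂ : upperLinearDensity μ₂ x = 0) :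
    upperLinearDensity (a • μ₀ + b • μ₁ + c • μ₂) x ≤ b * upperLinearDensity μ₁ x :=
  calc upperLinearDensity (a • μ₀ + b • μ₁ + c • μ₂) x
      ≤ upperLinearDensity (a • μ₀ + b • μ₁) x + upperLinearDensity (c • μ₂) x :=
        upperLinearDensity_add_le
    _ ≤ upperLinearDensity (a • μ₀) x + upperLinearDensity (b • μ₁) x
          + upperLinearDensity (c • μ₂) x := by gcongr; exact upperLinearDensity_add_le
    _ = b * upperLinearDensity μ₁ x := by
        rw [upperLinearDensity_smul ha, upperLinearDensity_smul hb, upperLinearDensity_smul hc,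
          h₀, h₂, mul_zero, mul_zero, zero_add, add_zero]

theorem lowerLinearDensity_mixture_pos {a b c : ℝ≥0∞} {μ₀ μ₁ μ₂ : Measure X}
    (hb₀ : b ≠ 0) (hb : b ≠ ∞) (h : 0 < lowerLinearDensity μ₁ x) :
    0 < lowerLinearDensity (a • μ₀ + b • μ₁ + c • μ₂) x :=
  calc 0 < b * lowerLinearDensity μ₁ x := ENNReal.mul_pos hb₀ h.ne'
    _ = lowerLinearDensity (b • μ₁) x := (lowerLinearDensity_smul hb).symm
    _ ≤ lowerLinearDensity (a • μ₀ + b • μ₁ + c • μ₂) x :=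
        lowerLinearDensity_mono (Measure.le_add_right (Measure.le_add_left le_rfl))

theorem upperLinearDensity_finsetSum_le {ι : Type*} (s : Finset ι) (μ : ι → Measure X) :
    upperLinearDensity (∑ i ∈ s, μ i) x ≤ ∑ i ∈ s, upperLinearDensity (μ i) x :=
  Finset.le_sum_of_subadditive (upperLinearDensity · x) (by simp [upperLinearDensity])
    (fun _ _ => upperLinearDensity_add_le) s μ

theorem upperLinearDensity_eq_zero_of_notMem {A : Set X} (hA : IsClosed A) (hμ : μ Aᶜ = 0)
    (hx : x ∉ A) : upperLinearDensity μ x = 0 := by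
  have hball : ∀ᶠ r : ℝ in 𝓝[>] 0, closedBall x r ⊆ Aᶜ :=
    nhdsWithin_le_nhds (eventually_closedBall_subset (hA.isOpen_compl.mem_nhds hx))
  refine (limsup_congr (hball.mono fun r hr => ?_)).trans (limsup_const 0)
  rw [measure_mono_null hr hμ, ENNReal.zero_div]

theorem measure_singleton_eq_zero_of_upperLinearDensity_ne_top
    (h : upperLinearDensity μ x ≠ ∞) : μ {x} = 0 := by
  obtain ⟨b, hb, hb_top⟩ := exists_between h.lt_top
  have hle : ∀ᶠ r : ℝ in 𝓝[>] 0, μ {x} ≤ b * ENNReal.ofReal (2 * r) := by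
    filter_upwards [eventually_lt_of_limsup_lt hb, self_mem_nhdsWithin] with r hr (hr0 : 0 < r)
    calc μ {x} ≤ μ (closedBall x r) :=
          measure_mono (singleton_subset_iff.2 (mem_closedBall_self hr0.le))
      _ ≤ b * ENNReal.ofReal (2 * r) :=
          (ENNReal.div_le_iff (by simpa using hr0) ENNReal.ofReal_ne_top).1 hr.le
  have hlim : Tendsto (fun r : ℝ => b * ENNReal.ofReal (2 * r)) (𝓝[>] 0) (𝓝 0) := by
    have hcont : Continuous fun r : ℝ => b * ENNReal.ofReal (2 * r) :=
      (ENNReal.continuous_const_mul hb_top.ne).comp (ENNReal.continuous_ofReal.comp (by fun_prop))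
    simpa using (hcont.tendsto 0).mono_left nhdsWithin_le_nhds
  exact le_zero_iff.1 (ge_of_tendsto hlim hle)

theorem tendsto_measure_closedBall_div_pow_of_lowerLinearDensity_pos
    (h : 0 < lowerLinearDensity μ x) (C : ℝ) {d : ℕ} (hd : 1 < d) :
    Tendsto (fun r : ℝ => μ (closedBall x r) / ENNReal.ofReal (C * r ^ d)) (𝓝[>] 0) (𝓝 ∞) := by
  obtain ⟨b, hb0, hb⟩ := exists_between h
  have hlim : Tendsto
      (fun r : ℝ => b * (ENNReal.ofReal (C * r ^ d) / ENNReal.ofReal (2 * r))⁻¹)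
      (𝓝[>] 0) (𝓝 ∞) := by
    have hinv := (tendsto_ofReal_const_mul_pow_div_two_mul C hd).inv
    rw [ENNReal.inv_zero] at hinv
    simpa [ENNReal.mul_top hb0.ne'] using
      ENNReal.Tendsto.const_mul (a := b) hinv (.inl ENNReal.top_ne_zero)
  refine tendsto_nhds_top_mono hlim ?_
  filter_upwards [eventually_lt_of_lt_liminf hb, self_mem_nhdsWithin] with r hr (hr0 : 0 < r)
  have hdiam : ENNReal.ofReal (2 * r) ≠ 0 := (ENNReal.ofReal_pos.2 (by positivity)).ne'
  calc b * (ENNReal.ofReal (C * r ^ d) / ENNReal.ofReal (2 * r))⁻¹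
      = b * ENNReal.ofReal (2 * r) / ENNReal.ofReal (C * r ^ d) := by
        rw [ENNReal.inv_div (.inl ENNReal.ofReal_ne_top) (.inl hdiam), mul_div_assoc]
    _ ≤ μ (closedBall x r) / ENNReal.ofReal (C * r ^ d) := by
        gcongr
        exact ((ENNReal.lt_div_iff_mul_lt (.inl hdiam) (.inl ENNReal.ofReal_ne_top)).1 hr).le

end LinearDensity

theorem upperLinearDensity_addHaar {E : Type*} [NormedAddCommGroup E] [NormedSpace ℝ E]
    [FiniteDimensional ℝ E] [MeasurableSpace E] [BorelSpace E] (ν : Measure E)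
    [ν.IsAddHaarMeasure] (hE : 1 < finrank ℝ E) (x : E) : upperLinearDensity ν x = 0 := by
  have hlim : Tendsto (fun r : ℝ =>
      ν (ball 0 1) * (ENNReal.ofReal (1 * r ^ finrank ℝ E) / ENNReal.ofReal (2 * r)))
      (𝓝[>] 0) (𝓝 0) := by
    simpa only [mul_zero] using ENNReal.Tendsto.const_mul (a := ν (ball 0 1))
      (tendsto_ofReal_const_mul_pow_div_two_mul 1 hE) (.inr measure_ball_lt_top.ne)
  refine (hlim.congr' ?_).limsup_eq
  filter_upwards [self_mem_nhdsWithin] with r (hr : 0 < r)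
  rw [Measure.addHaar_closedBall ν x hr.le, one_mul, mul_comm (ENNReal.ofReal _), mul_div_assoc]

section Density

variable {α : Type*} [MeasurableSpace α] {m : Measure α} {S : Set α} {f : α → ℝ≥0∞} {M : ℝ≥0∞}

theorem withDensity_restrict_le_smul (hS : MeasurableSet S) (hf : ∀ t ∈ S, f t ≤ M) :
    (m.restrict S).withDensity f ≤ M • m.restrict S :=
  (withDensity_mono (ae_restrict_of_forall_mem hS hf)).trans_eq (withDensity_const M)

theorem smul_le_withDensity_restrict (hS : MeasurableSet S) (hf : ∀ t ∈ S, M ≤ f t) :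
    M • m.restrict S ≤ (m.restrict S).withDensity f :=
  (withDensity_const M).symm.trans_le (withDensity_mono (ae_restrict_of_forall_mem hS hf))

end Density

theorem antilipschitzWith_domRestrict_of_mul_dist_le {X Y : Type*} [PseudoMetricSpace X]
    [PseudoMetricSpace Y] {g : X → Y} {S : Set X} {c : ℝ} (hc : 0 < c)
    (h : ∀ s ∈ S, ∀ t ∈ S, c * dist s t ≤ dist (g s) (g t)) :
    AntilipschitzWith c⁻¹.toNNReal (S.domRestrict g) :=
  .of_le_mul_dist fun s t => by
    rw [Real.coe_toNNReal _ (inv_nonneg.2 hc.le), le_inv_mul_iff₀ hc]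
    exact h s s.2 t t.2

theorem volume_le_mul_ediam_image {X : Type*} [PseudoEMetricSpace X] {γ : ℝ → X}
    {T : Set ℝ} {K : ℝ≥0} (hγ : AntilipschitzWith K (T.domRestrict γ)) :
    volume T ≤ K * ediam (γ '' T) :=
  calc volume T ≤ ediam T := Real.volume_le_diam T
    _ = ediam (univ : Set T) := by
        rw [← isometry_subtype_coe.ediam_image, image_univ, Subtype.range_coe]
    _ ≤ K * ediam (T.domRestrict γ '' univ) := hγ.le_mul_ediam_image univ
    _ = K * ediam (γ '' T) := by rw [image_univ, range_domRestrict]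

section UpperBound

variable {X : Type*} [PseudoMetricSpace X] [MeasurableSpace X] [OpensMeasurableSpace X]
  {γ : ℝ → X} {S : Set ℝ} {K : ℝ≥0} {f : ℝ → ℝ≥0∞} {M : ℝ≥0∞}

theorem upperLinearDensity_map_volume_restrict_le (hγ : AEMeasurable γ (volume.restrict S))
    (hanti : AntilipschitzWith K (S.domRestrict γ)) (x : X) :
    upperLinearDensity ((volume.restrict S).map γ) x ≤ K := by
  refine limsup_le_of_le (by isBoundedDefault) (.of_forall fun r => ENNReal.div_le_of_le_mul ?_)
  have hanti' : AntilipschitzWith K ((γ ⁻¹' closedBall x r ∩ S).domRestrict γ) :=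
    fun u v => hanti ⟨u, u.2.2⟩ ⟨v, v.2.2⟩
  have hdiam : ediam (closedBall x r) ≤ ENNReal.ofReal (2 * r) :=
    ediam_le_of_forall_dist_le fun y hy z hz => by
      linarith [dist_triangle_right y z x, mem_closedBall.1 hy, mem_closedBall.1 hz]
  calc (volume.restrict S).map γ (closedBall x r)
      = volume (γ ⁻¹' closedBall x r ∩ S) := by
        rw [Measure.map_apply_of_aemeasurable hγ measurableSet_closedBall,
          Measure.restrict_apply₀ (hγ.nullMeasurableSet_preimage measurableSet_closedBall)]
    _ ≤ K * ediam (γ '' (γ ⁻¹' closedBall x r ∩ S)) := volume_le_mul_ediam_image hanti'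
    _ ≤ K * ediam (closedBall x r) := by
        gcongr
        exact (image_mono inter_subset_left).trans (image_preimage_subset _ _)
    _ ≤ K * ENNReal.ofReal (2 * r) := by gcongr

theorem upperLinearDensity_map_withDensity_le (hS : MeasurableSet S)
    (hγ : AEMeasurable γ (volume.restrict S)) (hanti : AntilipschitzWith K (S.domRestrict γ))
    (hM : M ≠ ∞) (hf : ∀ t ∈ S, f t ≤ M) (x : X) :
    upperLinearDensity (((volume.restrict S).withDensity f).map γ) x ≤ M * K :=
  calc upperLinearDensity (((volume.restrict S).withDensity f).map γ) x
      ≤ upperLinearDensity ((M • volume.restrict S).map γ) x :=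
        upperLinearDensity_mono (Measure.map_mono_of_aemeasurable
          (withDensity_restrict_le_smul hS hf) (hγ.smul_measure M))
    _ = M * upperLinearDensity ((volume.restrict S).map γ) x := by
        rw [Measure.map_smul, upperLinearDensity_smul hM]
    _ ≤ M * K := by gcongr; exact upperLinearDensity_map_volume_restrict_le hγ hanti x

theorem upperLinearDensity_sum_map_withDensity_le {ι : Type*} [Fintype ι] {γ : ι → ℝ → X}
    {f : ι → ℝ → ℝ≥0∞} (hS : MeasurableSet S) (hγ : ∀ j, AEMeasurable (γ j) (volume.restrict S))
    (hanti : ∀ j, AntilipschitzWith K (S.domRestrict (γ j))) (hM : M ≠ ∞)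
    (hf : ∀ j, ∀ t ∈ S, f j t ≤ M) (x : X) :
    upperLinearDensity (∑ j, ((volume.restrict S).withDensity (f j)).map (γ j)) x ≤
      Fintype.card ι * (M * K) :=
  calc upperLinearDensity (∑ j, ((volume.restrict S).withDensity (f j)).map (γ j)) x
      ≤ ∑ j, upperLinearDensity (((volume.restrict S).withDensity (f j)).map (γ j)) x :=
        upperLinearDensity_finsetSum_le _ _
    _ ≤ ∑ _j : ι, M * K := Finset.sum_le_sum fun j _ =>
        upperLinearDensity_map_withDensity_le hS (hγ j) (hanti j) hM (hf j) x
    _ = Fintype.card ι * (M * K) := by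
        rw [Finset.sum_const, Finset.card_univ, nsmul_eq_mul]

end UpperBound

theorem ofReal_le_volume_closedBall_inter_Icc_s7 {a b s : ℝ} (hs : s ∈ Icc a b) {δ : ℝ}
    (hδ : δ ≤ b - a) :
    ENNReal.ofReal δ ≤ volume (closedBall s δ ∩ Icc a b) := by
  rcases le_total δ 0 with hδ0 | hδ0
  · simp [ENNReal.ofReal_of_nonpos hδ0]
  · rw [Real.closedBall_eq_Icc, Icc_inter_Icc, Real.volume_Icc]
    apply ENNReal.ofReal_le_ofReal
    rcases max_cases (s - δ) a with ⟨h, -⟩ | ⟨h, -⟩ <;>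
      rcases min_cases (s + δ) b with ⟨h', -⟩ | ⟨h', -⟩ <;> linarith [hs.1, hs.2]

section LowerBound

variable {X : Type*} [PseudoMetricSpace X] [MeasurableSpace X] [BorelSpace X]
  {γ : ℝ → X} {K : ℝ≥0} {f : ℝ → ℝ≥0∞} {M : ℝ≥0∞} {a b s : ℝ}

theorem inv_le_lowerLinearDensity_map_volume_restrict (hγ : LipschitzOnWith K γ (Icc a b))
    (hK : 0 < K) (hab : a < b) (hs : s ∈ Icc a b) :
    (2 * K : ℝ≥0∞)⁻¹ ≤ lowerLinearDensity ((volume.restrict (Icc a b)).map γ) (γ s) := by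
  have hsmall : ∀ᶠ r : ℝ in 𝓝[>] 0, r / K ≤ b - a := by
    have hcont : Continuous fun r : ℝ => r / K := by fun_prop
    exact nhdsWithin_le_nhds ((hcont.tendsto 0).eventually (ge_mem_nhds (by simpa using hab)))
  refine le_liminf_of_le (by isBoundedDefault) ?_
  filter_upwards [hsmall, self_mem_nhdsWithin] with r hrK (hr : 0 < r)
  have hmaps : closedBall s (r / K) ∩ Icc a b ⊆ γ ⁻¹' closedBall (γ s) r ∩ Icc a b := by
    rintro t ⟨hts, ht⟩
    refine ⟨(hγ.dist_le_mul t ht s hs).trans ?_, ht⟩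
    rwa [mul_comm, ← le_div_iff₀ (by exact_mod_cast hK)]
  rw [ENNReal.le_div_iff_mul_le (.inl (by simpa using hr)) (.inl ENNReal.ofReal_ne_top)]
  calc (2 * K : ℝ≥0∞)⁻¹ * ENNReal.ofReal (2 * r)
      = ENNReal.ofReal (r / K) := by
        rw [ENNReal.ofReal_div_of_pos (by exact_mod_cast hK), ENNReal.ofReal_coe_nnreal,
          ENNReal.ofReal_mul zero_le_two, ENNReal.ofReal_ofNat, mul_comm, ← div_eq_mul_inv,
          ENNReal.mul_div_mul_left _ _ two_ne_zero ENNReal.ofNat_ne_top]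
    _ ≤ volume (closedBall s (r / K) ∩ Icc a b) := ofReal_le_volume_closedBall_inter_Icc_s7 hs hrK
    _ ≤ volume (γ ⁻¹' closedBall (γ s) r ∩ Icc a b) := measure_mono hmaps
    _ ≤ volume.restrict (Icc a b) (γ ⁻¹' closedBall (γ s) r) := Measure.le_restrict_apply _ _
    _ ≤ (volume.restrict (Icc a b)).map γ (closedBall (γ s) r) :=
        Measure.le_map_apply (hγ.continuousOn.aemeasurable measurableSet_Icc) _

theorem mul_inv_le_lowerLinearDensity_map_withDensity (hγ : LipschitzOnWith K γ (Icc a b))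
    (hK : 0 < K) (hM : M ≠ ∞) (hf : ∀ t ∈ Icc a b, M ≤ f t) (hab : a < b) (hs : s ∈ Icc a b) :
    M * (2 * K : ℝ≥0∞)⁻¹ ≤
      lowerLinearDensity (((volume.restrict (Icc a b)).withDensity f).map γ) (γ s) := by
  have hγm : AEMeasurable γ ((volume.restrict (Icc a b)).withDensity f) :=
    (hγ.continuousOn.aemeasurable measurableSet_Icc).mono_ac (withDensity_absolutelyContinuous _ _)
  calc M * (2 * K : ℝ≥0∞)⁻¹
      ≤ M * lowerLinearDensity ((volume.restrict (Icc a b)).map γ) (γ s) := by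
        gcongr
        exact inv_le_lowerLinearDensity_map_volume_restrict hγ hK hab hs
    _ = lowerLinearDensity ((M • volume.restrict (Icc a b)).map γ) (γ s) := by
        rw [Measure.map_smul, lowerLinearDensity_smul hM]
    _ ≤ lowerLinearDensity (((volume.restrict (Icc a b)).withDensity f).map γ) (γ s) :=
        lowerLinearDensity_mono (Measure.map_mono_of_aemeasurable
          (smul_le_withDensity_restrict measurableSet_Icc hf) hγm)

theorem lowerLinearDensity_sum_map_withDensity_pos {ι : Type*} [Fintype ι] {γ : ι → ℝ → X}
    {f : ι → ℝ → ℝ≥0∞} {i : ι} (hγ : LipschitzOnWith K (γ i) (Icc a b)) (hK : 0 < K)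
    (hM₀ : M ≠ 0) (hM : M ≠ ∞) (hf : ∀ t ∈ Icc a b, M ≤ f i t) (hab : a < b) (hs : s ∈ Icc a b) :
    0 < lowerLinearDensity
      (∑ j, ((volume.restrict (Icc a b)).withDensity (f j)).map (γ j)) (γ i s) :=
  calc 0 < M * (2 * K : ℝ≥0∞)⁻¹ :=
        ENNReal.mul_pos hM₀
          (ENNReal.inv_ne_zero.2 (ENNReal.mul_ne_top ENNReal.ofNat_ne_top ENNReal.coe_ne_top))
    _ ≤ lowerLinearDensity (((volume.restrict (Icc a b)).withDensity (f i)).map (γ i)) (γ i s) :=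
        mul_inv_le_lowerLinearDensity_map_withDensity hγ hK hM hf hab hs
    _ ≤ _ := lowerLinearDensity_mono <| Finset.single_le_sum
        (f := fun j => ((volume.restrict (Icc a b)).withDensity (f j)).map (γ j))
        (fun _ _ => Measure.zero_le _) (Finset.mem_univ i)

end LowerBound

theorem road_points_hausdorff_density_general {E : Type*} [NormedAddCommGroup E] [NormedSpace ℝ E]
    [FiniteDimensional ℝ E] [MeasurableSpace E] [BorelSpace E] (hE : 1 < finrank ℝ E)
    (ν : Measure E) [ν.IsAddHaarMeasure] {a₀ A₀ c L π₀ π₁ π₂ : ℝ}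
    (ha₀ : 0 < a₀) (hc : 0 < c) (hL : 0 < L) (hπ₁ : 0 < π₁)
    {A : Set E} (hA : IsClosed A) {μ₀ : Measure E} (hμ₀ : μ₀ Aᶜ = 0)
    {k : ℕ} {γ : Fin k → ℝ → E}
    (hγlow : ∀ j, ∀ s ∈ Icc (0 : ℝ) 1, ∀ t ∈ Icc (0 : ℝ) 1, c * |s - t| ≤ ‖γ j s - γ j t‖)
    (hγup : ∀ j, ∀ s ∈ Icc (0 : ℝ) 1, ∀ t ∈ Icc (0 : ℝ) 1, ‖γ j s - γ j t‖ ≤ L * |s - t|)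
    {f : Fin k → ℝ → ℝ} (hflow : ∀ j, ∀ t ∈ Icc (0 : ℝ) 1, a₀ ≤ f j t)
    (hfup : ∀ j, ∀ t ∈ Icc (0 : ℝ) 1, f j t ≤ A₀)
    {μ₁ : Measure E} (hμ₁ : μ₁ = ∑ j, ((volume.restrict (Icc (0 : ℝ) 1)).withDensity
      fun t => ENNReal.ofReal (f j t)).map (γ j))
    {p₂ : E → ℝ} (hp₂ : ∀ x, p₂ x ≤ A₀)
    {μ₂ : Measure E} (hμ₂ : μ₂ = ν.withDensity fun x => ENNReal.ofReal (p₂ x))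
    {μ : Measure E}
    (hμ : μ = ENNReal.ofReal π₀ • μ₀ + ENNReal.ofReal π₁ • μ₁ + ENNReal.ofReal π₂ • μ₂)
    {x : E} (hx : x ∈ (⋃ j, γ j '' Icc (0 : ℝ) 1) \ A)
    (C : ℝ) {d : ℕ} (hd : 1 < d) :
    μ {x} = 0 ∧
      upperLinearDensity μ x ≤ ENNReal.ofReal (π₁ * k * A₀ / c) ∧
      Tendsto (fun r : ℝ => μ (closedBall x r) / ENNReal.ofReal (C * r ^ d)) (𝓝[>] 0) (𝓝 ⊤) := by
  obtain ⟨hxR, hxA⟩ := hx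
  obtain ⟨i, s, hs, rfl⟩ := mem_iUnion.1 hxR
  have hlip (j : Fin k) : LipschitzOnWith L.toNNReal (γ j) (Icc 0 1) :=
    .of_dist_le_mul fun s hs t ht => by
      simpa only [Real.coe_toNNReal _ hL.le, dist_eq_norm, Real.norm_eq_abs] using hγup j s hs t ht
  have hanti (j : Fin k) : AntilipschitzWith c⁻¹.toNNReal ((Icc 0 1).domRestrict (γ j)) :=
    antilipschitzWith_domRestrict_of_mul_dist_le hc fun s hs t ht => by
      simpa only [dist_eq_norm, Real.norm_eq_abs] using hγlow j s hs t ht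
  have hanchors : upperLinearDensity μ₀ (γ i s) = 0 :=
    upperLinearDensity_eq_zero_of_notMem hA hμ₀ hxA
  have hroads : upperLinearDensity μ₁ (γ i s) ≤ k * ENNReal.ofReal (A₀ / c) := by
    rw [hμ₁, div_eq_mul_inv, ENNReal.ofReal_mul' (inv_nonneg.2 hc.le)]
    simpa only [Fintype.card_fin, ENNReal.ofReal] using
      upperLinearDensity_sum_map_withDensity_le measurableSet_Icc
        (fun j => (hlip j).continuousOn.aemeasurable measurableSet_Icc) hanti ENNReal.ofReal_ne_top
        (fun j t ht => ENNReal.ofReal_le_ofReal (hfup j t ht)) (γ i s)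
  have hplanar : upperLinearDensity μ₂ (γ i s) = 0 :=
    hμ₂ ▸ upperLinearDensity_withDensity_eq_zero (upperLinearDensity_addHaar ν hE _)
      ENNReal.ofReal_ne_top fun y => ENNReal.ofReal_le_ofReal (hp₂ y)
  have hupper : upperLinearDensity μ (γ i s) ≤ ENNReal.ofReal (π₁ * k * A₀ / c) :=
    calc upperLinearDensity μ (γ i s)
        ≤ ENNReal.ofReal π₁ * upperLinearDensity μ₁ (γ i s) :=
          hμ ▸ upperLinearDensity_mixture_le ENNReal.ofReal_ne_top ENNReal.ofReal_ne_top
            ENNReal.ofReal_ne_top hanchors hplanar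
      _ ≤ ENNReal.ofReal π₁ * (k * ENNReal.ofReal (A₀ / c)) := by gcongr
      _ = ENNReal.ofReal (π₁ * k * A₀ / c) := by
          rw [mul_assoc, mul_div_assoc, mul_div_assoc, ENNReal.ofReal_mul hπ₁.le,
            ENNReal.ofReal_mul k.cast_nonneg, ENNReal.ofReal_natCast]
  have hlower : 0 < lowerLinearDensity μ (γ i s) :=
    hμ ▸ lowerLinearDensity_mixture_pos (ENNReal.ofReal_pos.2 hπ₁).ne' ENNReal.ofReal_ne_top
      (hμ₁ ▸ lowerLinearDensity_sum_map_withDensity_pos (hlip i) (Real.toNNReal_pos.2 hL)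
        (ENNReal.ofReal_pos.2 ha₀).ne' ENNReal.ofReal_ne_top
        (fun t ht => ENNReal.ofReal_le_ofReal (hflow i t ht)) zero_lt_one hs)
  exact ⟨measure_singleton_eq_zero_of_upperLinearDensity_ne_top
      (hupper.trans_lt ENNReal.ofReal_lt_top).ne, hupper,
    tendsto_measure_closedBall_div_pow_of_lowerLinearDensity_pos hlower C hd⟩

/-- every point `x ∈ R \ A` carries no atom, has bounded one-dimensional
Hausdorff density (`limsup_{r→0⁺} μ(B̄(x,r))/(2r) ≤ π₁·k·A₀/c`), and infinite
two-dimensional Hausdorff density (`μ(B̄(x,r))/(π·r²) → ∞`). -/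
theorem road_points_hausdorff_density
    (a₀ A₀ c L π₀ π₁ π₂ : ℝ)
    (ha₀ : 0 < a₀) (ha₀A₀ : a₀ ≤ A₀) (hc : 0 < c) (hcL : c ≤ L)
    (hπ₀ : 0 < π₀) (hπ₁ : 0 < π₁) (hπ₂ : 0 < π₂) (hπsum : π₀ + π₁ + π₂ = 1)
    (A : Set (EuclideanSpace ℝ (Fin 2))) (hAfin : A.Finite) (hAne : A.Nonempty)
    (μ₀ : Measure (EuclideanSpace ℝ (Fin 2))) [IsProbabilityMeasure μ₀]
    (hμ₀supp : μ₀ Aᶜ = 0)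
    (hμ₀atom : ∀ a ∈ A, ENNReal.ofReal a₀ ≤ μ₀ {a})
    (k : ℕ) (γ : Fin k → ℝ → EuclideanSpace ℝ (Fin 2))
    (hγmeas : ∀ j, Measurable (γ j))
    (hγlow : ∀ j, ∀ s ∈ Icc (0:ℝ) 1, ∀ t ∈ Icc (0:ℝ) 1, c * |s - t| ≤ ‖γ j s - γ j t‖)
    (hγup : ∀ j, ∀ s ∈ Icc (0:ℝ) 1, ∀ t ∈ Icc (0:ℝ) 1, ‖γ j s - γ j t‖ ≤ L * |s - t|)
    (R : Set (EuclideanSpace ℝ (Fin 2))) (hR : R = ⋃ j, γ j '' Icc (0:ℝ) 1)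
    (hAR : A ⊆ R)
    (f : Fin k → ℝ → ℝ) (hfmeas : ∀ j, Measurable (f j))
    (hflow : ∀ j, ∀ t ∈ Icc (0:ℝ) 1, a₀ ≤ f j t)
    (hfup : ∀ j, ∀ t ∈ Icc (0:ℝ) 1, f j t ≤ A₀)
    (μ₁ : Measure (EuclideanSpace ℝ (Fin 2))) [IsProbabilityMeasure μ₁]
    (hμ₁ : μ₁ = ∑ j : Fin k, Measure.map (γ j)
      ((volume.restrict (Icc (0:ℝ) 1)).withDensity fun t => ENNReal.ofReal (f j t)))
    (p₂ : EuclideanSpace ℝ (Fin 2) → ℝ) (hp₂meas : Measurable p₂)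
    (hp₂low : ∀ x, 0 ≤ p₂ x) (hp₂up : ∀ x, p₂ x ≤ A₀)
    (μ₂ : Measure (EuclideanSpace ℝ (Fin 2))) [IsProbabilityMeasure μ₂]
    (hμ₂ : μ₂ = volume.withDensity fun x => ENNReal.ofReal (p₂ x))
    (μ : Measure (EuclideanSpace ℝ (Fin 2)))
    (hμ : μ = ENNReal.ofReal π₀ • μ₀ + ENNReal.ofReal π₁ • μ₁ + ENNReal.ofReal π₂ • μ₂)
    :
    ∀ x ∈ R \ A,
      μ {x} = 0 ∧
      Filter.limsup (fun r : ℝ => μ (closedBall x r) / ENNReal.ofReal (2 * r))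
        (𝓝[>] (0:ℝ)) ≤ ENNReal.ofReal (π₁ * k * A₀ / c) ∧
      Tendsto (fun r : ℝ => μ (closedBall x r) / ENNReal.ofReal (Real.pi * r ^ 2))
        (𝓝[>] (0:ℝ)) (𝓝 ⊤) := by
  intro x hx
  subst hR
  exact road_points_hausdorff_density_general (by simp) volume ha₀ hc (hc.trans_le hcL) hπ₁
    hAfin.isClosed hμ₀supp hγlow hγup hflow hfup hμ₁ hp₂up hμ₂ hμ hx Real.pi one_lt_two
end

section
/- Assume additionally that p₂ is continuous at a point x ∉ A ∪ R. Then the two-dimensional Hausdorff density of μ at x exists and equals lim_{r→0⁺} μ(closedBall(x,r))/(π·r²) = π₂·p₂(x) < ∞. -/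
/-!
The finite set `A` and the compact curves `R` carry `μ₀` and `μ₁`, so a point `x ∉ A ∪ R` lies
outside the supports of these two measures and small balls around `x` see only `π₂ • μ₂`. Its
average density over such a ball tends to `π₂ * p₂ x` by continuity of `p₂` at `x`.
-/

open MeasureTheory Filter Metric Set Topology

open scoped ENNReal

section Support

variable {X : Type*} [TopologicalSpace X] [MeasurableSpace X]

lemma measureSupport_smul_subset (c : ℝ≥0∞) (μ : Measure X) : (c • μ).support ⊆ μ.support :=
  Measure.smul_absolutelyContinuous.support_mono

lemma measureSupport_finsetSum {ι : Type*} (s : Finset ι) (μ : ι → Measure X) :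
    (∑ i ∈ s, μ i).support = ⋃ i ∈ s, (μ i).support := by
  classical
  induction s using Finset.induction_on with
  | empty => simp
  | insert i s hi ih =>
    rw [Finset.sum_insert hi, Measure.support_add, ih, Finset.set_biUnion_insert]

lemma measureSupport_map_subset_image [T2Space X] [OpensMeasurableSpace X] {T : Type*}
    [TopologicalSpace T] [MeasurableSpace T] {τ : Measure T} {γ : T → X} {K : Set T}
    (hγ : AEMeasurable γ τ) (hK : IsCompact K) (hγK : ContinuousOn γ K) (hτ : K ∈ ae τ) :
    (τ.map γ).support ⊆ γ '' K := by
  have hclosed : IsClosed (γ '' K) := (hK.image_of_continuousOn hγK).isClosed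
  refine Measure.support_subset_of_isClosed hclosed ?_
  exact (mem_ae_map_iff hγ hclosed.measurableSet).2 (mem_of_superset hτ (subset_preimage_image γ K))

end Support

lemma tendsto_setLAverage {X ι : Type*} [MeasurableSpace X] {μ : Measure X} {F : Filter X}
    {l : Filter ι} {s : ι → Set X} {g : X → ℝ≥0∞} {a : ℝ≥0∞} (hg : Tendsto g F (𝓝 a))
    (hs : Tendsto s l F.smallSets) (hmeas : ∀ᶠ i in l, MeasurableSet (s i))
    (hpos : ∀ᶠ i in l, μ (s i) ≠ 0) (hfin : ∀ᶠ i in l, μ (s i) ≠ ∞) :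
    Tendsto (fun i => ⨍⁻ y in s i, g y ∂μ) l (𝓝 a) := by
  refine tendsto_order.2 ⟨fun b hb => ?_, fun b hb => ?_⟩
  · obtain ⟨d, hbd, hda⟩ := exists_between hb
    filter_upwards [hs.eventually (hg.eventually_const_lt hda).smallSets, hmeas, hpos, hfin]
      with i hgi hi hi₀ hi_top
    calc b < d := hbd
      _ = ⨍⁻ _ in s i, d ∂μ := (setLAverage_const hi₀ hi_top d).symm
      _ ≤ ⨍⁻ y in s i, g y ∂μ :=
        laverage_mono_ae (ae_restrict_of_forall_mem hi fun y hy => (hgi y hy).le)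
  · obtain ⟨d, had, hdb⟩ := exists_between hb
    filter_upwards [hs.eventually (hg.eventually_lt_const had).smallSets, hmeas, hpos, hfin]
      with i hgi hi hi₀ hi_top
    calc ⨍⁻ y in s i, g y ∂μ ≤ ⨍⁻ _ in s i, d ∂μ :=
          laverage_mono_ae (ae_restrict_of_forall_mem hi fun y hy => (hgi y hy).le)
      _ = d := setLAverage_const hi₀ hi_top d
      _ < b := hdb

section ClosedBall

variable {X : Type*} [PseudoMetricSpace X] [MeasurableSpace X] [OpensMeasurableSpace X]
  (vol : Measure X) [vol.IsOpenPosMeasure] [IsLocallyFiniteMeasure vol]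

lemma tendsto_withDensity_closedBall_div {g : X → ℝ≥0∞} {x : X} (hg : ContinuousAt g x) :
    Tendsto (fun r : ℝ => vol.withDensity g (closedBall x r) / vol (closedBall x r))
      (𝓝[>] 0) (𝓝 (g x)) := by
  have hballs : Tendsto (closedBall x) (𝓝[>] 0) (𝓝 x).smallSets :=
    (tendsto_closedBall_smallSets x).mono_left nhdsWithin_le_nhds
  have hpos : ∀ᶠ r : ℝ in 𝓝[>] 0, vol (closedBall x r) ≠ 0 := by
    filter_upwards [self_mem_nhdsWithin] with r hr using (measure_closedBall_pos vol x hr).ne'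
  have hfin : ∀ᶠ r : ℝ in 𝓝[>] 0, vol (closedBall x r) ≠ ∞ :=
    (hballs.eventually (vol.finiteAt_nhds x).eventually).mono fun _ hr => hr.ne
  refine (tendsto_setLAverage hg hballs
    (.of_forall fun _ => measurableSet_closedBall) hpos hfin).congr fun r => ?_
  rw [setLAverage_eq, withDensity_apply _ measurableSet_closedBall]

lemma tendsto_add_smul_withDensity_closedBall_div {ν : Measure X} {c : ℝ≥0∞} (hc : c ≠ ∞)
    {g : X → ℝ≥0∞} {x : X} (hx : x ∉ ν.support) (hg : ContinuousAt g x) :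
    Tendsto (fun r : ℝ => (ν + c • vol.withDensity g) (closedBall x r) / vol (closedBall x r))
      (𝓝[>] 0) (𝓝 (c * g x)) := by
  have hν : ∀ᶠ r : ℝ in 𝓝[>] 0, ν (closedBall x r) = 0 :=
    ((tendsto_closedBall_smallSets x).mono_left nhdsWithin_le_nhds).eventually
      (Measure.notMem_support_iff.1 hx)
  refine (ENNReal.Tendsto.const_mul
    (tendsto_withDensity_closedBall_div vol hg) (.inr hc)).congr' ?_
  filter_upwards [hν] with r hr
  rw [Measure.add_apply, hr, zero_add, Measure.smul_apply, smul_eq_mul, mul_div_assoc]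

end ClosedBall

lemma volume_closedBall_eq_ofReal_pi_mul_sq (x : EuclideanSpace ℝ (Fin 2)) {r : ℝ} (hr : 0 ≤ r) :
    volume (closedBall x r) = ENNReal.ofReal (Real.pi * r ^ 2) := by
  rw [EuclideanSpace.volume_closedBall_fin_two, ← ENNReal.ofReal_pow hr,
    ← ENNReal.ofReal_mul (sq_nonneg r), mul_comm]

theorem two_dim_density_at_open_space_point_general
    {X T ι : Type*} [MetricSpace X] [MeasurableSpace X] [OpensMeasurableSpace X]
    [TopologicalSpace T] [MeasurableSpace T] [Fintype ι]
    (vol : Measure X) [vol.IsOpenPosMeasure] [IsLocallyFiniteMeasure vol]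
    (π₀ π₁ : ℝ≥0∞) {π₂ : ℝ≥0∞} (hπ₂ : π₂ ≠ ∞)
    {A : Set X} (hA : IsClosed A) {μ₀ : Measure X} (hμ₀ : μ₀ Aᶜ = 0)
    {τ : ι → Measure T} {K : ι → Set T} (hK : ∀ j, IsCompact (K j)) (hτ : ∀ j, K j ∈ ae (τ j))
    {γ : ι → T → X} (hγ : ∀ j, AEMeasurable (γ j) (τ j)) (hγK : ∀ j, ContinuousOn (γ j) (K j))
    {p₂ : X → ℝ≥0∞} {x : X} (hx : x ∉ A ∪ ⋃ j, γ j '' K j) (hp₂ : ContinuousAt p₂ x) :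
    Tendsto (fun r : ℝ =>
        (π₀ • μ₀ + π₁ • ∑ j, (τ j).map (γ j) + π₂ • vol.withDensity p₂) (closedBall x r) /
          vol (closedBall x r))
      (𝓝[>] 0) (𝓝 (π₂ * p₂ x)) := by
  have hμ₀_support : (π₀ • μ₀).support ⊆ A :=
    (measureSupport_smul_subset π₀ μ₀).trans (Measure.support_subset_of_isClosed hA hμ₀)
  have hcurves_support : (π₁ • ∑ j, (τ j).map (γ j)).support ⊆ ⋃ j, γ j '' K j := by
    refine (measureSupport_smul_subset π₁ _).trans ?_
    simp only [measureSupport_finsetSum, Finset.mem_univ, iUnion_true]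
    exact iUnion_mono fun j => measureSupport_map_subset_image (hγ j) (hK j) (hγK j) (hτ j)
  refine tendsto_add_smul_withDensity_closedBall_div vol hπ₂ (fun h => hx ?_) hp₂
  rw [Measure.support_add] at h
  exact union_subset_union hμ₀_support hcurves_support h

/-- if `p₂` is continuous at a point `x ∉ A ∪ R`, then the
two-dimensional Hausdorff density of `μ` at `x` exists and equals `π₂·p₂(x)`:
`μ(B̄(x,r))/(π·r²) → π₂·p₂(x)` as `r → 0⁺`. -/
theorem two_dim_density_at_open_space_point
    (a₀ A₀ c L π₀ π₁ π₂ : ℝ)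
    (ha₀ : 0 < a₀) (ha₀A₀ : a₀ ≤ A₀) (hc : 0 < c) (hcL : c ≤ L)
    (hπ₀ : 0 < π₀) (hπ₁ : 0 < π₁) (hπ₂ : 0 < π₂) (hπsum : π₀ + π₁ + π₂ = 1)
    (A : Set (EuclideanSpace ℝ (Fin 2))) (hAfin : A.Finite) (hAne : A.Nonempty)
    (μ₀ : Measure (EuclideanSpace ℝ (Fin 2))) [IsProbabilityMeasure μ₀]
    (hμ₀supp : μ₀ Aᶜ = 0)
    (hμ₀atom : ∀ a ∈ A, ENNReal.ofReal a₀ ≤ μ₀ {a})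
    (k : ℕ) (γ : Fin k → ℝ → EuclideanSpace ℝ (Fin 2))
    (hγmeas : ∀ j, Measurable (γ j))
    (hγlow : ∀ j, ∀ s ∈ Icc (0:ℝ) 1, ∀ t ∈ Icc (0:ℝ) 1, c * |s - t| ≤ ‖γ j s - γ j t‖)
    (hγup : ∀ j, ∀ s ∈ Icc (0:ℝ) 1, ∀ t ∈ Icc (0:ℝ) 1, ‖γ j s - γ j t‖ ≤ L * |s - t|)
    (R : Set (EuclideanSpace ℝ (Fin 2))) (hR : R = ⋃ j, γ j '' Icc (0:ℝ) 1)
    (hAR : A ⊆ R)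
    (f : Fin k → ℝ → ℝ) (hfmeas : ∀ j, Measurable (f j))
    (hflow : ∀ j, ∀ t ∈ Icc (0:ℝ) 1, a₀ ≤ f j t)
    (hfup : ∀ j, ∀ t ∈ Icc (0:ℝ) 1, f j t ≤ A₀)
    (μ₁ : Measure (EuclideanSpace ℝ (Fin 2))) [IsProbabilityMeasure μ₁]
    (hμ₁ : μ₁ = ∑ j : Fin k, Measure.map (γ j)
      ((volume.restrict (Icc (0:ℝ) 1)).withDensity fun t => ENNReal.ofReal (f j t)))
    (p₂ : EuclideanSpace ℝ (Fin 2) → ℝ) (hp₂meas : Measurable p₂)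
    (hp₂low : ∀ x, 0 ≤ p₂ x) (hp₂up : ∀ x, p₂ x ≤ A₀)
    (μ₂ : Measure (EuclideanSpace ℝ (Fin 2))) [IsProbabilityMeasure μ₂]
    (hμ₂ : μ₂ = volume.withDensity fun x => ENNReal.ofReal (p₂ x))
    (μ : Measure (EuclideanSpace ℝ (Fin 2)))
    (hμ : μ = ENNReal.ofReal π₀ • μ₀ + ENNReal.ofReal π₁ • μ₁ + ENNReal.ofReal π₂ • μ₂)
    (x : EuclideanSpace ℝ (Fin 2)) (hx : x ∉ A ∪ R) (hcont : ContinuousAt p₂ x) :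
    Tendsto (fun r : ℝ => μ (closedBall x r) / ENNReal.ofReal (Real.pi * r ^ 2))
      (𝓝[>] (0:ℝ)) (𝓝 (ENNReal.ofReal (π₂ * p₂ x))) := by
  subst hR hμ₁ hμ₂ hμ
  have hγcont : ∀ j, ContinuousOn (γ j) (Icc 0 1) := fun j =>
    (LipschitzOnWith.of_dist_le' (K := L)
      (by simpa only [dist_eq_norm, Real.norm_eq_abs] using hγup j)).continuousOn
  have hτ (j : Fin k) :
      Icc 0 1 ∈ ae ((volume.restrict (Icc 0 1)).withDensity fun t => ENNReal.ofReal (f j t)) :=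
    (withDensity_absolutelyContinuous _ _).ae_le (self_mem_ae_restrict measurableSet_Icc)
  have density := two_dim_density_at_open_space_point_general volume
    (ENNReal.ofReal π₀) (ENNReal.ofReal π₁) (ENNReal.ofReal_ne_top (r := π₂))
    hAfin.isClosed hμ₀supp (fun _ => isCompact_Icc) hτ (fun j => (hγmeas j).aemeasurable) hγcont
    hx (ENNReal.tendsto_ofReal hcont)
  rw [ENNReal.ofReal_mul hπ₂.le]
  refine density.congr' ?_
  filter_upwards [self_mem_nhdsWithin] with r hr
  rw [volume_closedBall_eq_ofReal_pi_mul_sq x hr.le]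
end

section
/- There exists a constant C > 0 such that for every h ∈ (0, 1], π₀ ≤ μ(A ⊕ h) ≤ π₀ + C·h, where A ⊕ h = {y ∈ ℝ² : dist(y, A) ≤ h} is the h-dilation of the anchor set A. In particular μ(A ⊕ h) → π₀ as h → 0⁺. -/
open MeasureTheory Filter Metric Set Topology

/-!
The dilation of the finite set `A` contains `A`, which carries all of `μ₀`, and is a finite union
of balls of radius `h`. The other two components of the mixture give every such ball mass `O(h)`:
the lower bi-Lipschitz bound confines the parameters that a curve sends into the ball to a set of
diameter `O(h)`, and a ball of radius `h ≤ 1` in dimension `d ≥ 1` has volume `O(h ^ d) = O(h)`.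
-/

open scoped NNReal ENNReal

section BallGrowth

variable {X : Type*} [PseudoMetricSpace X] [MeasurableSpace X]

/-- One-dimensional upper Ahlfors regularity at unit scale: the mass of a ball is at most linear in
its radius, uniformly in the centre. Only radii up to `1` are tested, so that Lebesgue measure
qualifies in every positive dimension. -/
def HasLinearBallGrowth (ν : Measure X) : Prop :=
  ∃ K : ℝ≥0, ∀ x, ∀ h ∈ Ioc (0 : ℝ) 1, ν (closedBall x h) ≤ K * ENNReal.ofReal h

namespace HasLinearBallGrowth

variable {ν ν' : Measure X}

lemma zero : HasLinearBallGrowth (0 : Measure X) :=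
  ⟨0, fun _ _ _ => by simp⟩

lemma mono (hν' : HasLinearBallGrowth ν') (hle : ν ≤ ν') : HasLinearBallGrowth ν :=
  let ⟨K, hK⟩ := hν'
  ⟨K, fun x h hh => (hle _).trans (hK x h hh)⟩

lemma add (hν : HasLinearBallGrowth ν) (hν' : HasLinearBallGrowth ν') :
    HasLinearBallGrowth (ν + ν') := by
  obtain ⟨K, hK⟩ := hν
  obtain ⟨K', hK'⟩ := hν'
  refine ⟨K + K', fun x h hh => ?_⟩
  rw [Measure.add_apply, ENNReal.coe_add, add_mul]
  exact add_le_add (hK x h hh) (hK' x h hh)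

lemma sum {ι : Type*} {s : Finset ι} {ν : ι → Measure X}
    (hν : ∀ i ∈ s, HasLinearBallGrowth (ν i)) : HasLinearBallGrowth (∑ i ∈ s, ν i) :=
  Finset.sum_induction ν HasLinearBallGrowth (fun _ _ => add) zero hν

lemma smul (hν : HasLinearBallGrowth ν) (w : ℝ≥0) : HasLinearBallGrowth (w • ν) := by
  obtain ⟨K, hK⟩ := hν
  refine ⟨w * K, fun x h hh => ?_⟩
  rw [Measure.smul_apply, ENNReal.smul_def, smul_eq_mul, ENNReal.coe_mul, mul_assoc]
  gcongr
  exact hK x h hh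

lemma exists_measure_cthickening_le (hν : HasLinearBallGrowth ν) {A : Set X} (hA : A.Finite) :
    ∃ C : ℝ≥0, ∀ h ∈ Ioc (0 : ℝ) 1, ν (cthickening h A) ≤ C * ENNReal.ofReal h := by
  obtain ⟨K, hK⟩ := hν
  refine ⟨hA.toFinset.card * K, fun h hh => ?_⟩
  calc ν (cthickening h A)
      = ν (⋃ a ∈ hA.toFinset, closedBall a h) := by
        simp only [hA.isCompact.cthickening_eq_biUnion_closedBall hh.1.le, hA.mem_toFinset]
    _ ≤ ∑ a ∈ hA.toFinset, ν (closedBall a h) := measure_biUnion_finset_le _ _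
    _ ≤ hA.toFinset.card • (K * ENNReal.ofReal h) :=
        Finset.sum_le_card_nsmul _ _ _ fun a _ => hK a h hh
    _ = (hA.toFinset.card * K : ℝ≥0) * ENNReal.ofReal h := by
        rw [nsmul_eq_mul, ENNReal.coe_mul, ENNReal.coe_natCast, mul_assoc]

end HasLinearBallGrowth

end BallGrowth

lemma withDensity_le_smul {X : Type*} [MeasurableSpace X] {ν : Measure X} {f : X → ℝ≥0∞} {M : ℝ≥0}
    (hf : ∀ᵐ x ∂ν, f x ≤ M) : ν.withDensity f ≤ M • ν :=
  (withDensity_mono hf).trans_eq (withDensity_const (M : ℝ≥0∞))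

lemma hasLinearBallGrowth_withDensity_addHaar {E : Type*} [NormedAddCommGroup E] [NormedSpace ℝ E]
    [FiniteDimensional ℝ E] [Nontrivial E] [MeasurableSpace E] [BorelSpace E]
    (ν : Measure E) [ν.IsAddHaarMeasure] {p : E → ℝ≥0∞} {M : ℝ≥0} (hp : ∀ᵐ x ∂ν, p x ≤ M) :
    HasLinearBallGrowth (ν.withDensity p) := by
  have hν : HasLinearBallGrowth ν := by
    refine ⟨(ν (ball 0 1)).toNNReal, fun x h hh => ?_⟩
    rw [Measure.addHaar_closedBall ν x hh.1.le, ENNReal.coe_toNNReal measure_ball_lt_top.ne,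
      mul_comm]
    gcongr
    exact pow_le_of_le_one hh.1.le hh.2 Module.finrank_pos.ne'
  exact (hν.smul M).mono (withDensity_le_smul hp)

section Curve

variable {X : Type*} [PseudoMetricSpace X] {γ : ℝ → X} {s : Set ℝ} {K : ℝ≥0}

lemma antilipschitzWith_domRestrict_of_mul_abs_sub_le_dist {c : ℝ} (hc : 0 < c)
    (hγ : ∀ t ∈ s, ∀ u ∈ s, c * |t - u| ≤ dist (γ t) (γ u)) :
    AntilipschitzWith (Real.toNNReal c⁻¹) (s.domRestrict γ) :=
  .of_le_mul_dist fun t u => by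
    rw [Real.coe_toNNReal _ (inv_nonneg.2 hc.le), le_inv_mul_iff₀ hc]
    exact hγ t t.2 u u.2

lemma volume_preimage_inter_le_mul_ediam (hγ : AntilipschitzWith K (s.domRestrict γ)) (B : Set X) :
    volume (γ ⁻¹' B ∩ s) ≤ K * ediam B :=
  calc volume (γ ⁻¹' B ∩ s)
      ≤ ediam (γ ⁻¹' B ∩ s) := Real.volume_le_diam _
    _ = ediam (s.domRestrict γ ⁻¹' B) := by
        rw [inter_comm, ← Subtype.image_preimage_coe, isometry_subtype_coe.ediam_image]
        rfl
    _ ≤ K * ediam B := hγ.ediam_preimage_le B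

variable [MeasurableSpace X] [OpensMeasurableSpace X]

lemma hasLinearBallGrowth_map_restrict (hmeas : AEMeasurable γ (volume.restrict s))
    (hγ : AntilipschitzWith K (s.domRestrict γ)) :
    HasLinearBallGrowth (Measure.map γ (volume.restrict s)) := by
  refine ⟨K * 2, fun x h hh => ?_⟩
  calc Measure.map γ (volume.restrict s) (closedBall x h)
      = volume (γ ⁻¹' closedBall x h ∩ s) := by
        rw [Measure.map_apply_of_aemeasurable hmeas measurableSet_closedBall,
          Measure.restrict_apply₀ (hmeas.nullMeasurable measurableSet_closedBall)]
    _ ≤ K * ediam (closedBall x h) := volume_preimage_inter_le_mul_ediam hγ _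
    _ ≤ K * (2 * ENNReal.ofReal h) := by
        gcongr
        rw [← closedEBall_ofReal hh.1.le]
        exact ediam_closedEBall_le
    _ = (K * 2 : ℝ≥0) * ENNReal.ofReal h := by
        rw [ENNReal.coe_mul, ENNReal.coe_ofNat, mul_assoc]

lemma hasLinearBallGrowth_map_withDensity (hmeas : AEMeasurable γ (volume.restrict s))
    (hγ : AntilipschitzWith K (s.domRestrict γ)) {f : ℝ → ℝ≥0∞} {M : ℝ≥0}
    (hf : ∀ᵐ t ∂volume.restrict s, f t ≤ M) :
    HasLinearBallGrowth (Measure.map γ ((volume.restrict s).withDensity f)) := by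
  refine ((hasLinearBallGrowth_map_restrict hmeas hγ).smul M).mono ?_
  rw [← Measure.map_smul]
  exact Measure.map_mono_of_aemeasurable (withDensity_le_smul hf) (hmeas.smul_measure M)

end Curve

lemma setOf_infDist_le_eq_cthickening {X : Type*} [PseudoMetricSpace X] {A : Set X}
    (hA : A.Nonempty) {h : ℝ} (hh : 0 ≤ h) : {y | infDist y A ≤ h} = cthickening h A :=
  ext fun _ => (ENNReal.le_ofReal_iff_toReal_le (infEDist_ne_top hA) hh).symm

lemma measure_cthickening_eq_measure_univ {X : Type*} [PseudoMetricSpace X] [MeasurableSpace X]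
    {ρ : Measure X} {A : Set X} (hρ : ρ Aᶜ = 0) (h : ℝ) : ρ (cthickening h A) = ρ univ :=
  measure_of_measure_compl_eq_zero <|
    measure_mono_null (compl_subset_compl.2 (self_subset_cthickening A)) hρ

lemma tendsto_nhdsGT_zero_of_le_of_le_add_mul {g : ℝ → ℝ≥0∞} {w C : ℝ}
    (hg : ∀ h : ℝ, 0 < h → h ≤ 1 → ENNReal.ofReal w ≤ g h ∧ g h ≤ ENNReal.ofReal (w + C * h)) :
    Tendsto g (𝓝[>] 0) (𝓝 (ENNReal.ofReal w)) := by
  have hIoc : ∀ᶠ h : ℝ in 𝓝[>] 0, h ∈ Ioc (0 : ℝ) 1 := Ioc_mem_nhdsGT one_pos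
  have hupper : Tendsto (fun h : ℝ => ENNReal.ofReal (w + C * h)) (𝓝[>] 0)
      (𝓝 (ENNReal.ofReal w)) := by
    have hcont : Continuous fun h : ℝ => ENNReal.ofReal (w + C * h) :=
      ENNReal.continuous_ofReal.comp (by fun_prop)
    simpa only [mul_zero, add_zero] using (hcont.tendsto 0).mono_left nhdsWithin_le_nhds
  exact tendsto_of_tendsto_of_tendsto_of_le_of_le' tendsto_const_nhds hupper
    (hIoc.mono fun h hh => (hg h hh.1 hh.2).1) (hIoc.mono fun h hh => (hg h hh.1 hh.2).2)

lemma exists_measure_infDist_le_bounds {X : Type*} [PseudoMetricSpace X] [MeasurableSpace X]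
    {ρ ν : Measure X} {A : Set X} (hA : A.Finite) (hAne : A.Nonempty) {w : ℝ} (hw : 0 ≤ w)
    (hρA : ρ Aᶜ = 0) (hρ : ρ univ = ENNReal.ofReal w) (hν : HasLinearBallGrowth ν) :
    ∃ C : ℝ, 0 < C ∧ ∀ h : ℝ, 0 < h → h ≤ 1 →
      ENNReal.ofReal w ≤ (ρ + ν) {y | infDist y A ≤ h} ∧
      (ρ + ν) {y | infDist y A ≤ h} ≤ ENNReal.ofReal (w + C * h) := by
  obtain ⟨C, hC⟩ := hν.exists_measure_cthickening_le hA
  refine ⟨C + 1, by positivity, fun h h0 h1 => ?_⟩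
  rw [setOf_infDist_le_eq_cthickening hAne h0.le, Measure.add_apply,
    measure_cthickening_eq_measure_univ hρA, hρ, ENNReal.ofReal_add hw (by positivity)]
  refine ⟨le_self_add, ?_⟩
  gcongr
  calc ν (cthickening h A)
      ≤ C * ENNReal.ofReal h := hC h ⟨h0, h1⟩
    _ = ENNReal.ofReal (C * h) := by
        rw [ENNReal.ofReal_mul C.coe_nonneg, ENNReal.ofReal_coe_nnreal]
    _ ≤ ENNReal.ofReal ((C + 1) * h) := by
        gcongr
        exact le_add_of_nonneg_right zero_le_one

theorem measure_dilation_of_anchor_set_general {E : Type*} [NormedAddCommGroup E]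
    [NormedSpace ℝ E] [FiniteDimensional ℝ E] [Nontrivial E] [MeasurableSpace E] [BorelSpace E]
    {M : ℝ≥0} {c : ℝ} (hc : 0 < c) (π₀ π₁ π₂ : ℝ≥0)
    {A : Set E} (hA : A.Finite) (hAne : A.Nonempty)
    (μ₀ : Measure E) [IsProbabilityMeasure μ₀] (hμ₀ : μ₀ Aᶜ = 0)
    {ι : Type*} [Fintype ι] {γ : ι → ℝ → E}
    (hγmeas : ∀ j, AEMeasurable (γ j) (volume.restrict (Icc 0 1)))
    (hγ : ∀ j, ∀ s ∈ Icc (0 : ℝ) 1, ∀ t ∈ Icc (0 : ℝ) 1, c * |s - t| ≤ ‖γ j s - γ j t‖)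
    {f : ι → ℝ → ℝ≥0∞} (hf : ∀ j, ∀ t ∈ Icc (0 : ℝ) 1, f j t ≤ M)
    (ν : Measure E) [ν.IsAddHaarMeasure] {p : E → ℝ≥0∞} (hp : ∀ x, p x ≤ M)
    {μ : Measure E}
    (hμ : μ = π₀ • μ₀ + π₁ • ∑ j, Measure.map (γ j) ((volume.restrict (Icc 0 1)).withDensity (f j))
      + π₂ • ν.withDensity p) :
    (∃ C : ℝ, 0 < C ∧ ∀ h : ℝ, 0 < h → h ≤ 1 →
      ENNReal.ofReal π₀ ≤ μ {y | infDist y A ≤ h} ∧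
      μ {y | infDist y A ≤ h} ≤ ENNReal.ofReal (π₀ + C * h)) ∧
    Tendsto (fun h : ℝ => μ {y | infDist y A ≤ h}) (𝓝[>] 0) (𝓝 (ENNReal.ofReal π₀)) := by
  have hcurves : HasLinearBallGrowth
      (∑ j, Measure.map (γ j) ((volume.restrict (Icc 0 1)).withDensity (f j))) :=
    .sum fun j _ => hasLinearBallGrowth_map_withDensity (hγmeas j)
      (antilipschitzWith_domRestrict_of_mul_abs_sub_le_dist hc <| by
        simpa only [dist_eq_norm] using hγ j)
      (ae_restrict_of_forall_mem measurableSet_Icc (hf j))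
  have hdiffuse : HasLinearBallGrowth (ν.withDensity p) :=
    hasLinearBallGrowth_withDensity_addHaar ν (ae_of_all ν hp)
  have hatomsA : (π₀ • μ₀) Aᶜ = 0 := by rw [Measure.smul_apply, hμ₀, smul_zero]
  have hatoms : (π₀ • μ₀) univ = ENNReal.ofReal π₀ := by
    rw [Measure.smul_apply, measure_univ, ENNReal.smul_def, smul_eq_mul, mul_one,
      ENNReal.ofReal_coe_nnreal]
  have hbounds := exists_measure_infDist_le_bounds hA hAne π₀.coe_nonneg hatomsA hatoms
    ((hcurves.smul π₁).add (hdiffuse.smul π₂))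
  rw [← add_assoc, ← hμ] at hbounds
  exact ⟨hbounds, hbounds.elim fun _ hC => tendsto_nhdsGT_zero_of_le_of_le_add_mul hC.2⟩

/-- there is `C > 0` with `π₀ ≤ μ(A ⊕ h) ≤ π₀ + C·h` for all
`h ∈ (0,1]`; in particular `μ(A ⊕ h) → π₀` as `h → 0⁺`. -/
theorem measure_dilation_of_anchor_set
    (a₀ A₀ c L π₀ π₁ π₂ : ℝ)
    (ha₀ : 0 < a₀) (ha₀A₀ : a₀ ≤ A₀) (hc : 0 < c) (hcL : c ≤ L)
    (hπ₀ : 0 < π₀) (hπ₁ : 0 < π₁) (hπ₂ : 0 < π₂) (hπsum : π₀ + π₁ + π₂ = 1)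
    (A : Set (EuclideanSpace ℝ (Fin 2))) (hAfin : A.Finite) (hAne : A.Nonempty)
    (μ₀ : Measure (EuclideanSpace ℝ (Fin 2))) [IsProbabilityMeasure μ₀]
    (hμ₀supp : μ₀ Aᶜ = 0)
    (hμ₀atom : ∀ a ∈ A, ENNReal.ofReal a₀ ≤ μ₀ {a})
    (k : ℕ) (γ : Fin k → ℝ → EuclideanSpace ℝ (Fin 2))
    (hγmeas : ∀ j, Measurable (γ j))
    (hγlow : ∀ j, ∀ s ∈ Icc (0:ℝ) 1, ∀ t ∈ Icc (0:ℝ) 1, c * |s - t| ≤ ‖γ j s - γ j t‖)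
    (hγup : ∀ j, ∀ s ∈ Icc (0:ℝ) 1, ∀ t ∈ Icc (0:ℝ) 1, ‖γ j s - γ j t‖ ≤ L * |s - t|)
    (R : Set (EuclideanSpace ℝ (Fin 2))) (hR : R = ⋃ j, γ j '' Icc (0:ℝ) 1)
    (hAR : A ⊆ R)
    (f : Fin k → ℝ → ℝ) (hfmeas : ∀ j, Measurable (f j))
    (hflow : ∀ j, ∀ t ∈ Icc (0:ℝ) 1, a₀ ≤ f j t)
    (hfup : ∀ j, ∀ t ∈ Icc (0:ℝ) 1, f j t ≤ A₀)
    (μ₁ : Measure (EuclideanSpace ℝ (Fin 2))) [IsProbabilityMeasure μ₁]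
    (hμ₁ : μ₁ = ∑ j : Fin k, Measure.map (γ j)
      ((volume.restrict (Icc (0:ℝ) 1)).withDensity fun t => ENNReal.ofReal (f j t)))
    (p₂ : EuclideanSpace ℝ (Fin 2) → ℝ) (hp₂meas : Measurable p₂)
    (hp₂low : ∀ x, 0 ≤ p₂ x) (hp₂up : ∀ x, p₂ x ≤ A₀)
    (μ₂ : Measure (EuclideanSpace ℝ (Fin 2))) [IsProbabilityMeasure μ₂]
    (hμ₂ : μ₂ = volume.withDensity fun x => ENNReal.ofReal (p₂ x))
    (μ : Measure (EuclideanSpace ℝ (Fin 2)))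
    (hμ : μ = ENNReal.ofReal π₀ • μ₀ + ENNReal.ofReal π₁ • μ₁ + ENNReal.ofReal π₂ • μ₂)
    :
    (∃ C : ℝ, 0 < C ∧ ∀ h : ℝ, 0 < h → h ≤ 1 →
      ENNReal.ofReal π₀ ≤ μ {y | infDist y A ≤ h} ∧
      μ {y | infDist y A ≤ h} ≤ ENNReal.ofReal (π₀ + C * h)) ∧
    Tendsto (fun h : ℝ => μ {y | infDist y A ≤ h}) (𝓝[>] (0:ℝ))
      (𝓝 (ENNReal.ofReal π₀)) := by
  subst hμ₁ hμ₂
  simpa only [Real.coe_toNNReal π₀ hπ₀.le] using measure_dilation_of_anchor_set_general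
    (M := A₀.toNNReal) hc π₀.toNNReal π₁.toNNReal π₂.toNNReal hAfin hAne μ₀ hμ₀supp
    (fun j => (hγmeas j).aemeasurable) hγlow (fun j t ht => ENNReal.ofReal_le_ofReal (hfup j t ht))
    volume (fun x => ENNReal.ofReal_le_ofReal (hp₂up x)) hμ
end

section
/- There exists a constant C > 0 such that for every h ∈ (0, 1], π₀ + π₁ ≤ μ((A ∪ R) ⊕ h) ≤ π₀ + π₁ + C·h, where (A ∪ R) ⊕ h = {y ∈ ℝ² : dist(y, A ∪ R) ≤ h} is the h-dilation of the union of the anchor set and the roads. In particular μ((A ∪ R) ⊕ h) → π₀ + π₁ as h → 0⁺. -/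
/-!
The anchors lie on the roads, so `A ∪ R = R` and every dilation of it carries all the mass of `μ₀`
and of `μ₁`; only the mass of `μ₂`, at most a multiple of the volume of the dilation of `R`, is in
excess. A Lipschitz curve is covered by `O(1 / h)` balls of radius proportional to `h`, hence its
`h`-dilation is covered by as many balls of radius `O(h)`, whose total volume in dimension `d + 1`
is `O(h ^ d)`.
-/

open MeasureTheory Filter Metric Set Topology

open Module (finrank)
open scoped NNReal ENNReal

lemma coveringNumber_image_le_of_lipschitzOnWith {X Y : Type*} [PseudoEMetricSpace X]
    [PseudoEMetricSpace Y] {f : X → Y} {s : Set X} {K : ℝ≥0} (hf : LipschitzOnWith K f s)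
    (ε : ℝ≥0) : coveringNumber (K * ε) (f '' s) ≤ coveringNumber ε s := by
  refine le_iInf₂ fun N hNs => le_iInf fun hN => ?_
  have hcover : IsCover (K * ε) (f '' s) (f '' N) := by
    rintro _ ⟨x, hx, rfl⟩
    obtain ⟨y, hy, hxy⟩ := hN hx
    refine ⟨f y, mem_image_of_mem f hy, (hf hx (hNs hy)).trans ?_⟩
    rw [ENNReal.coe_mul]
    exact mul_le_mul_right hxy _
  exact (hcover.coveringNumber_le_encard (image_mono hNs)).trans (encard_image_le f N)

lemma coveringNumber_Icc_le (a b : ℝ) {ε : ℝ≥0} (hε : 0 < ε) :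
    coveringNumber ε (Icc a b) ≤ ((⌊(b - a) / ε⌋₊ + 1 : ℕ) : ℕ∞) := by
  rcases lt_or_ge b a with hba | hab
  · simp only [Icc_eq_empty_of_lt hba, coveringNumber_empty, zero_le]
  have hε' : (0 : ℝ) < ε := hε
  let grid : ℕ → ℝ := fun i => a + i * ε
  let I : Set ℕ := Finset.range (⌊(b - a) / ε⌋₊ + 1)
  have hgrid : grid '' I ⊆ Icc a b := by
    rintro _ ⟨i, hi, rfl⟩
    have hi' : (i : ℝ) ≤ (b - a) / ε :=
      (Nat.le_floor_iff (by bound)).1 (Nat.lt_succ_iff.1 (Finset.mem_range.1 hi))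
    have := (le_div_iff₀ hε').1 hi'
    exact ⟨le_add_of_nonneg_right (by positivity), by linarith⟩
  have hcover : IsCover ε (Icc a b) (grid '' I) := by
    refine IsCover.of_subset_iUnion_closedBall fun t ⟨hat, htb⟩ => ?_
    have hfloor_le : ⌊(t - a) / ε⌋₊ ≤ ⌊(b - a) / ε⌋₊ := by gcongr
    have hle : ⌊(t - a) / ε⌋₊ * (ε : ℝ) ≤ t - a :=
      (le_div_iff₀ hε').1 (Nat.floor_le (div_nonneg (by linarith) hε'.le))
    have hlt : t - a < (⌊(t - a) / ε⌋₊ + 1) * (ε : ℝ) :=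
      (div_lt_iff₀ hε').1 (Nat.lt_floor_add_one _)
    refine mem_biUnion
      (mem_image_of_mem grid (Finset.mem_range.2 (Nat.lt_succ_of_le hfloor_le))) ?_
    rw [mem_closedBall, Real.dist_eq, abs_le]
    constructor <;> simp only [grid] <;> linarith
  calc coveringNumber ε (Icc a b)
      ≤ (grid '' I).encard := hcover.coveringNumber_le_encard hgrid
    _ ≤ I.encard := encard_image_le grid I
    _ = ((⌊(b - a) / ε⌋₊ + 1 : ℕ) : ℕ∞) := by rw [encard_coe_eq_coe_finsetCard, Finset.card_range]

lemma cthickening_eq_setOf_infDist_le {X : Type*} [PseudoMetricSpace X] {s : Set X}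
    (hs : s.Nonempty) {δ : ℝ} (hδ : 0 ≤ δ) : cthickening δ s = {x | infDist x s ≤ δ} :=
  Set.ext fun _ => ENNReal.le_ofReal_iff_toReal_le (infEDist_ne_top hs) hδ

lemma cthickening_iUnion_of_finite {X ι : Type*} [PseudoEMetricSpace X] [Finite ι]
    (δ : ℝ) (s : ι → Set X) : cthickening δ (⋃ i, s i) = ⋃ i, cthickening δ (s i) := by
  refine Subset.antisymm (fun x hx => ?_)
    (iUnion_subset fun i => cthickening_subset_of_subset δ (subset_iUnion s i))
  cases isEmpty_or_nonempty ι
  · simp only [iUnion_of_empty, cthickening_empty, mem_empty_iff_false] at hx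
  obtain ⟨i, hi⟩ := exists_eq_ciInf_of_finite (f := fun i => infEDist x (s i))
  rw [mem_cthickening_iff, infEDist_iUnion, ← hi] at hx
  exact mem_iUnion_of_mem i hx

lemma cthickening_subset_biUnion_closedBall {X : Type*} [PseudoMetricSpace X] {s N : Set X}
    {ε : ℝ≥0} (hN : N.Finite) (hcover : IsCover ε s N) {δ : ℝ} (hδ : 0 ≤ δ) :
    cthickening δ s ⊆ ⋃ x ∈ N, closedBall x (δ + ε) := by
  have hs : s ⊆ cthickening ε N := by
    rw [hN.isCompact.cthickening_eq_biUnion_closedBall ε.coe_nonneg]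
    exact hcover.subset_iUnion_closedBall
  calc cthickening δ s
      ⊆ cthickening δ (cthickening ε N) := cthickening_subset_of_subset δ hs
    _ ⊆ cthickening (δ + ε) N := cthickening_cthickening_subset hδ ε.coe_nonneg N
    _ = ⋃ x ∈ N, closedBall x (δ + ε) :=
        hN.isCompact.cthickening_eq_biUnion_closedBall (by positivity)

lemma measure_cthickening_le_coveringNumber_mul {X : Type*} [PseudoMetricSpace X]
    [MeasurableSpace X] (μ : Measure X) {s : Set X} {ε : ℝ≥0} (hs : coveringNumber ε s ≠ ⊤)
    {δ : ℝ} (hδ : 0 ≤ δ) {V : ℝ≥0∞} (hV : ∀ x, μ (closedBall x (δ + ε)) ≤ V) :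
    μ (cthickening δ s) ≤ coveringNumber ε s * V := by
  obtain ⟨N, -, hN, hcover, hcard⟩ := exists_set_encard_eq_coveringNumber hs
  calc μ (cthickening δ s)
      ≤ μ (⋃ x ∈ N, closedBall x (δ + ε)) :=
        measure_mono (cthickening_subset_biUnion_closedBall hN hcover hδ)
    _ ≤ ∑' x : N, μ (closedBall (x : X) (δ + ε)) := measure_biUnion_le μ hN.countable _
    _ ≤ ∑' _ : N, V := ENNReal.tsum_le_tsum fun _ => hV _
    _ = coveringNumber ε s * V := by rw [ENNReal.tsum_set_const, hcard]

section Tube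

variable {E : Type*} [NormedAddCommGroup E] [NormedSpace ℝ E] [FiniteDimensional ℝ E]
  [MeasurableSpace E] [BorelSpace E] (ρ : Measure E) [ρ.IsAddHaarMeasure]
  {d : ℕ} {a b h : ℝ} {K : ℝ≥0}

lemma addHaar_cthickening_image_Icc_le (hd : finrank ℝ E = d + 1) (hab : a ≤ b) (h0 : 0 < h)
    {f : ℝ → E} (hf : LipschitzOnWith K f (Icc a b)) :
    ρ (cthickening h (f '' Icc a b)) ≤
      ENNReal.ofReal ((b - a + h) * (K + 1) ^ (d + 1) * h ^ d) * ρ (ball 0 1) := by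
  lift h to ℝ≥0 using h0.le
  have hcard : coveringNumber (K * h) (f '' Icc a b) ≤ ((⌊(b - a) / h⌋₊ + 1 : ℕ) : ℕ∞) :=
    (coveringNumber_image_le_of_lipschitzOnWith hf h).trans (coveringNumber_Icc_le a b h0)
  have hball : ∀ x, ρ (closedBall x (h + (K * h : ℝ≥0))) ≤
      ENNReal.ofReal (((K + 1) * h) ^ (d + 1)) * ρ (ball 0 1) := fun x => by
    rw [← hd, ← Measure.addHaar_closedBall ρ x (by positivity), NNReal.coe_mul,
      show (h : ℝ) + K * h = (K + 1) * h by ring]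
  have hcount : (⌊(b - a) / h⌋₊ + 1 : ℝ) * h ≤ b - a + h := by
    have := (le_div_iff₀ h0).1 (Nat.floor_le (div_nonneg (sub_nonneg.2 hab) h0.le))
    linarith
  calc ρ (cthickening h (f '' Icc a b))
      ≤ coveringNumber (K * h) (f '' Icc a b) *
          (ENNReal.ofReal (((K + 1) * h) ^ (d + 1)) * ρ (ball 0 1)) :=
        measure_cthickening_le_coveringNumber_mul ρ
          (ne_top_of_le_ne_top (ENat.natCast_ne_top _) hcard) h.coe_nonneg hball
    _ ≤ (⌊(b - a) / h⌋₊ + 1 : ℕ) *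
          (ENNReal.ofReal (((K + 1) * h) ^ (d + 1)) * ρ (ball 0 1)) := by
        gcongr
        exact_mod_cast ENat.toENNReal_le.2 hcard
    _ = ENNReal.ofReal ((⌊(b - a) / h⌋₊ + 1) * h * (K + 1) ^ (d + 1) * h ^ d) * ρ (ball 0 1) := by
        rw [← ENNReal.ofReal_natCast, ← mul_assoc, ← ENNReal.ofReal_mul (Nat.cast_nonneg _)]
        congr 2
        rw [mul_pow, pow_succ (h : ℝ)]
        push_cast
        ring
    _ ≤ ENNReal.ofReal ((b - a + h) * (K + 1) ^ (d + 1) * h ^ d) * ρ (ball 0 1) := by gcongr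

lemma addHaar_cthickening_iUnion_image_Icc_le {ι : Type*} [Finite ι] (hd : finrank ℝ E = d + 1)
    (hab : a ≤ b) (h0 : 0 < h) {γ : ι → ℝ → E} (hγ : ∀ j, LipschitzOnWith K (γ j) (Icc a b)) :
    ρ (cthickening h (⋃ j, γ j '' Icc a b)) ≤ ENNReal.ofReal
      (Nat.card ι * ρ.real (ball 0 1) * (b - a + h) * (K + 1) ^ (d + 1) * h ^ d) := by
  cases nonempty_fintype ι
  have : 0 ≤ b - a + h := by linarith
  calc ρ (cthickening h (⋃ j, γ j '' Icc a b))
      ≤ ∑ j, ρ (cthickening h (γ j '' Icc a b)) := by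
        rw [cthickening_iUnion_of_finite]
        exact measure_iUnion_fintype_le ρ _
    _ ≤ ∑ _j : ι, ENNReal.ofReal ((b - a + h) * (K + 1) ^ (d + 1) * h ^ d) * ρ (ball 0 1) :=
        Finset.sum_le_sum fun j _ => addHaar_cthickening_image_Icc_le ρ hd hab h0 (hγ j)
    _ = ENNReal.ofReal
          (Nat.card ι * ρ.real (ball 0 1) * (b - a + h) * (K + 1) ^ (d + 1) * h ^ d) := by
        rw [Finset.sum_const, Finset.card_univ, ← Nat.card_eq_fintype_card, nsmul_eq_mul,
          ← ENNReal.ofReal_natCast,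
          ← ofReal_measureReal measure_ball_lt_top.ne, ← ENNReal.ofReal_mul (by positivity),
          ← ENNReal.ofReal_mul (by positivity)]
        congr 1
        ring

end Tube

lemma measure_eq_measure_univ_of_compl_eq_zero {X : Type*} [MeasurableSpace X] {μ : Measure X}
    {s t : Set X} (hs : μ sᶜ = 0) (hst : s ⊆ t) : μ t = μ univ :=
  measure_congr (ae_eq_univ.2 (measure_mono_null (compl_subset_compl.2 hst) hs))

lemma sum_map_withDensity_restrict_compl_iUnion_image_eq_zero {T X ι : Type*} [Fintype ι]
    [TopologicalSpace T] [T2Space T] [MeasurableSpace T] [OpensMeasurableSpace T]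
    [TopologicalSpace X] [T2Space X] [MeasurableSpace X] [OpensMeasurableSpace X]
    (μ : Measure T) {I : Set T} (hI : IsCompact I) {γ : ι → T → X} (hγ : ∀ j, Measurable (γ j))
    (hγI : ∀ j, ContinuousOn (γ j) I) (g : ι → T → ℝ≥0∞) :
    (∑ j, ((μ.restrict I).withDensity (g j)).map (γ j)) (⋃ j, γ j '' I)ᶜ = 0 := by
  have hmeas : MeasurableSet (⋃ j, γ j '' I) :=
    (isCompact_iUnion fun j => hI.image_of_continuousOn (hγI j)).measurableSet
  rw [Measure.finsetSum_apply]
  refine Finset.sum_eq_zero fun j _ => ?_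
  rw [Measure.map_apply (hγ j) hmeas.compl]
  have hsub : (γ j ⁻¹' (⋃ j, γ j '' I)ᶜ) ⊆ Iᶜ := fun t ht htI =>
    ht (mem_iUnion_of_mem j (mem_image_of_mem (γ j) htI))
  exact withDensity_absolutelyContinuous _ _
    (measure_mono_null hsub (ae_restrict_mem hI.measurableSet))

lemma mixture_apply_of_compl_eq_zero {X : Type*} [MeasurableSpace X] {μ₀ μ₁ : Measure X}
    [IsProbabilityMeasure μ₀] [IsProbabilityMeasure μ₁] {s t : Set X} (hμ₀ : μ₀ sᶜ = 0)
    (hμ₁ : μ₁ sᶜ = 0) (hst : s ⊆ t) {π₀ π₁ : ℝ} (hπ₀ : 0 ≤ π₀) (hπ₁ : 0 ≤ π₁) (ν : Measure X) :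
    (ENNReal.ofReal π₀ • μ₀ + ENNReal.ofReal π₁ • μ₁ + ν) t =
      ENNReal.ofReal (π₀ + π₁) + ν t := by
  simp only [Measure.add_apply, Measure.smul_apply, smul_eq_mul,
    measure_eq_measure_univ_of_compl_eq_zero hμ₀ hst,
    measure_eq_measure_univ_of_compl_eq_zero hμ₁ hst, measure_univ, mul_one,
    ENNReal.ofReal_add hπ₀ hπ₁]

lemma mixture_apply_le_of_compl_eq_zero {X : Type*} [MeasurableSpace X] {μ₀ μ₁ μ₂ ρ : Measure X}
    [IsProbabilityMeasure μ₀] [IsProbabilityMeasure μ₁] {s t : Set X} (hμ₀ : μ₀ sᶜ = 0)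
    (hμ₁ : μ₁ sᶜ = 0) (hst : s ⊆ t) {π₀ π₁ π₂ B v : ℝ} (hπ₀ : 0 ≤ π₀) (hπ₁ : 0 ≤ π₁)
    (hπ₂ : 0 ≤ π₂) (hB : 0 ≤ B) (hμ₂ : μ₂ ≤ ENNReal.ofReal B • ρ) (hv : 0 ≤ v)
    (hρ : ρ t ≤ ENNReal.ofReal v) :
    (ENNReal.ofReal π₀ • μ₀ + ENNReal.ofReal π₁ • μ₁ + ENNReal.ofReal π₂ • μ₂) t ≤
      ENNReal.ofReal (π₀ + π₁ + π₂ * (B * v)) := by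
  have hμ₂t : μ₂ t ≤ ENNReal.ofReal (B * v) :=
    calc μ₂ t ≤ ENNReal.ofReal B * ρ t := hμ₂ t
      _ ≤ ENNReal.ofReal B * ENNReal.ofReal v := by gcongr
      _ = ENNReal.ofReal (B * v) := (ENNReal.ofReal_mul hB).symm
  rw [mixture_apply_of_compl_eq_zero hμ₀ hμ₁ hst hπ₀ hπ₁, Measure.smul_apply, smul_eq_mul,
    ENNReal.ofReal_add (add_nonneg hπ₀ hπ₁) (by positivity), ENNReal.ofReal_mul hπ₂]
  gcongr

lemma tendsto_of_ofReal_le_of_le_ofReal_add_mul_pow {F : ℝ → ℝ≥0∞} {m C : ℝ} {d : ℕ} (hd : d ≠ 0)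
    (hlow : ∀ h, 0 < h → h ≤ 1 → ENNReal.ofReal m ≤ F h)
    (hup : ∀ h, 0 < h → h ≤ 1 → F h ≤ ENNReal.ofReal (m + C * h ^ d)) :
    Tendsto F (𝓝[>] 0) (𝓝 (ENNReal.ofReal m)) := by
  have hlim : Tendsto (fun h : ℝ => ENNReal.ofReal (m + C * h ^ d)) (𝓝[>] 0)
      (𝓝 (ENNReal.ofReal m)) := by
    have hcont : Continuous fun h : ℝ => ENNReal.ofReal (m + C * h ^ d) :=
      ENNReal.continuous_ofReal.comp (by fun_prop)
    simpa [hd] using (hcont.tendsto 0).mono_left nhdsWithin_le_nhds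
  have hsmall : ∀ᶠ h : ℝ in 𝓝[>] 0, h ∈ Ioc (0 : ℝ) 1 := Ioc_mem_nhdsGT one_pos
  exact tendsto_of_tendsto_of_tendsto_of_le_of_le' tendsto_const_nhds hlim
    (hsmall.mono fun h hh => hlow h hh.1 hh.2) (hsmall.mono fun h hh => hup h hh.1 hh.2)

theorem measure_dilation_of_anchor_and_road_set_general
    {E : Type*} [NormedAddCommGroup E] [NormedSpace ℝ E] [FiniteDimensional ℝ E]
    [MeasurableSpace E] [BorelSpace E] (ρ : Measure E) [ρ.IsAddHaarMeasure]
    {d : ℕ} (hd : d ≠ 0) (hdim : finrank ℝ E = d + 1)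
    {A₀ π₀ π₁ π₂ : ℝ} (hA₀ : 0 ≤ A₀) (hπ₀ : 0 ≤ π₀) (hπ₁ : 0 ≤ π₁) (hπ₂ : 0 ≤ π₂)
    {ι : Type*} [Finite ι] {γ : ι → ℝ → E} {a b : ℝ} (hab : a ≤ b) {K : ℝ≥0}
    (hγ : ∀ j, LipschitzOnWith K (γ j) (Icc a b))
    {A R : Set E} (hR : R = ⋃ j, γ j '' Icc a b) (hAR : A ⊆ R)
    {μ₀ μ₁ μ₂ μ : Measure E} [IsProbabilityMeasure μ₀] [IsProbabilityMeasure μ₁]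
    (hμ₀ : μ₀ Aᶜ = 0) (hμ₁ : μ₁ Rᶜ = 0) (hμ₂ : μ₂ ≤ ENNReal.ofReal A₀ • ρ)
    (hμ : μ = ENNReal.ofReal π₀ • μ₀ + ENNReal.ofReal π₁ • μ₁ + ENNReal.ofReal π₂ • μ₂) :
    (∃ C : ℝ, 0 < C ∧ ∀ h : ℝ, 0 < h → h ≤ 1 →
      ENNReal.ofReal (π₀ + π₁) ≤ μ {y | infDist y (A ∪ R) ≤ h} ∧
      μ {y | infDist y (A ∪ R) ≤ h} ≤ ENNReal.ofReal (π₀ + π₁ + C * h ^ d)) ∧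
    Tendsto (fun h : ℝ => μ {y | infDist y (A ∪ R) ≤ h}) (𝓝[>] 0)
      (𝓝 (ENNReal.ofReal (π₀ + π₁))) := by
  have hμ₀R : μ₀ Rᶜ = 0 := measure_mono_null (compl_subset_compl.2 hAR) hμ₀
  have hRne : R.Nonempty := nonempty_iff_ne_empty.2 fun hR0 => by
    simp only [hR0, compl_empty, measure_univ, one_ne_zero] at hμ₀R
  rw [union_eq_self_of_subset_left hAR]
  set V : ℝ := Nat.card ι * ρ.real (ball 0 1) * (b - a + 1) * (K + 1) ^ (d + 1)
  have hV : 0 ≤ V := by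
    have : 0 ≤ b - a := sub_nonneg.2 hab
    positivity
  have hvol : ∀ h : ℝ, 0 < h → h ≤ 1 →
      ρ {y | infDist y R ≤ h} ≤ ENNReal.ofReal (V * h ^ d) := fun h h0 h1 => by
    rw [← cthickening_eq_setOf_infDist_le hRne h0.le, hR]
    refine (addHaar_cthickening_iUnion_image_Icc_le ρ hdim hab h0 hγ).trans ?_
    simp only [V]
    gcongr
  have hsub : ∀ h : ℝ, 0 < h → R ⊆ {y | infDist y R ≤ h} := fun h h0 y hy =>
    (infDist_zero_of_mem hy).trans_le h0.le
  have hlow : ∀ h : ℝ, 0 < h → h ≤ 1 → ENNReal.ofReal (π₀ + π₁) ≤ μ {y | infDist y R ≤ h} :=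
    fun h h0 _ => by
      rw [hμ, mixture_apply_of_compl_eq_zero hμ₀R hμ₁ (hsub h h0) hπ₀ hπ₁]
      exact le_self_add
  have hup : ∀ h : ℝ, 0 < h → h ≤ 1 → μ {y | infDist y R ≤ h} ≤
      ENNReal.ofReal (π₀ + π₁ + (π₂ * A₀ * V + 1) * h ^ d) := fun h h0 h1 => by
    rw [hμ]
    refine (mixture_apply_le_of_compl_eq_zero hμ₀R hμ₁ (hsub h h0) hπ₀ hπ₁ hπ₂ hA₀ hμ₂
      (by positivity) (hvol h h0 h1)).trans ?_
    apply ENNReal.ofReal_le_ofReal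
    linarith [pow_nonneg h0.le d]
  exact ⟨⟨π₂ * A₀ * V + 1, by positivity, fun h h0 h1 => ⟨hlow h h0 h1, hup h h0 h1⟩⟩,
    tendsto_of_ofReal_le_of_le_ofReal_add_mul_pow hd hlow hup⟩

/-- there is `C > 0` with
`π₀ + π₁ ≤ μ((A ∪ R) ⊕ h) ≤ π₀ + π₁ + C·h` for all `h ∈ (0,1]`; in particular
`μ((A ∪ R) ⊕ h) → π₀ + π₁` as `h → 0⁺`. -/
theorem measure_dilation_of_anchor_and_road_set
    (a₀ A₀ c L π₀ π₁ π₂ : ℝ)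
    (ha₀ : 0 < a₀) (ha₀A₀ : a₀ ≤ A₀) (hc : 0 < c) (hcL : c ≤ L)
    (hπ₀ : 0 < π₀) (hπ₁ : 0 < π₁) (hπ₂ : 0 < π₂) (hπsum : π₀ + π₁ + π₂ = 1)
    (A : Set (EuclideanSpace ℝ (Fin 2))) (hAfin : A.Finite) (hAne : A.Nonempty)
    (μ₀ : Measure (EuclideanSpace ℝ (Fin 2))) [IsProbabilityMeasure μ₀]
    (hμ₀supp : μ₀ Aᶜ = 0)
    (hμ₀atom : ∀ a ∈ A, ENNReal.ofReal a₀ ≤ μ₀ {a})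
    (k : ℕ) (γ : Fin k → ℝ → EuclideanSpace ℝ (Fin 2))
    (hγmeas : ∀ j, Measurable (γ j))
    (hγlow : ∀ j, ∀ s ∈ Icc (0:ℝ) 1, ∀ t ∈ Icc (0:ℝ) 1, c * |s - t| ≤ ‖γ j s - γ j t‖)
    (hγup : ∀ j, ∀ s ∈ Icc (0:ℝ) 1, ∀ t ∈ Icc (0:ℝ) 1, ‖γ j s - γ j t‖ ≤ L * |s - t|)
    (R : Set (EuclideanSpace ℝ (Fin 2))) (hR : R = ⋃ j, γ j '' Icc (0:ℝ) 1)
    (hAR : A ⊆ R)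
    (f : Fin k → ℝ → ℝ) (hfmeas : ∀ j, Measurable (f j))
    (hflow : ∀ j, ∀ t ∈ Icc (0:ℝ) 1, a₀ ≤ f j t)
    (hfup : ∀ j, ∀ t ∈ Icc (0:ℝ) 1, f j t ≤ A₀)
    (μ₁ : Measure (EuclideanSpace ℝ (Fin 2))) [IsProbabilityMeasure μ₁]
    (hμ₁ : μ₁ = ∑ j : Fin k, Measure.map (γ j)
      ((volume.restrict (Icc (0:ℝ) 1)).withDensity fun t => ENNReal.ofReal (f j t)))
    (p₂ : EuclideanSpace ℝ (Fin 2) → ℝ) (hp₂meas : Measurable p₂)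
    (hp₂low : ∀ x, 0 ≤ p₂ x) (hp₂up : ∀ x, p₂ x ≤ A₀)
    (μ₂ : Measure (EuclideanSpace ℝ (Fin 2))) [IsProbabilityMeasure μ₂]
    (hμ₂ : μ₂ = volume.withDensity fun x => ENNReal.ofReal (p₂ x))
    (μ : Measure (EuclideanSpace ℝ (Fin 2)))
    (hμ : μ = ENNReal.ofReal π₀ • μ₀ + ENNReal.ofReal π₁ • μ₁ + ENNReal.ofReal π₂ • μ₂)
    :
    (∃ C : ℝ, 0 < C ∧ ∀ h : ℝ, 0 < h → h ≤ 1 →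
      ENNReal.ofReal (π₀ + π₁) ≤ μ {y | infDist y (A ∪ R) ≤ h} ∧
      μ {y | infDist y (A ∪ R) ≤ h} ≤ ENNReal.ofReal (π₀ + π₁ + C * h)) ∧
    Tendsto (fun h : ℝ => μ {y | infDist y (A ∪ R) ≤ h}) (𝓝[>] (0:ℝ))
      (𝓝 (ENNReal.ofReal (π₀ + π₁))) := by
  have hA₀ : 0 ≤ A₀ := ha₀.le.trans ha₀A₀
  have hγ : ∀ j, LipschitzOnWith L.toNNReal (γ j) (Icc 0 1) := fun j =>
    LipschitzOnWith.of_dist_le_mul fun s hs t ht => by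
      simpa only [dist_eq_norm, Real.norm_eq_abs, Real.coe_toNNReal L (hc.le.trans hcL)]
        using hγup j s hs t ht
  have hμ₁R : μ₁ Rᶜ = 0 := by
    rw [hμ₁, hR]
    exact sum_map_withDensity_restrict_compl_iUnion_image_eq_zero volume isCompact_Icc hγmeas
      (fun j => (hγ j).continuousOn) _
  have hμ₂vol : μ₂ ≤ ENNReal.ofReal A₀ • volume := by
    rw [hμ₂, ← withDensity_const]
    exact withDensity_mono (ae_of_all _ fun x => ENNReal.ofReal_le_ofReal (hp₂up x))
  simpa only [pow_one] using measure_dilation_of_anchor_and_road_set_general volume one_ne_zero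
    finrank_euclideanSpace_fin hA₀ hπ₀.le hπ₁.le hπ₂.le zero_le_one hγ hR hAR hμ₀supp hμ₁R hμ₂vol hμ
end

section
/- Let I ⊆ ℝ² be any finite nonempty set. Then there exist constants C > 0 and r₁ > 0 such that for every r with 0 < r ≤ r₁, μ((I ⊕ r) \ I) ≤ C·r, where I ⊕ r = {y ∈ ℝ² : dist(y, I) ≤ r}. (In particular, for any sequence rₙ → 0, the mass μ(I ⊕ rₙ) exceeds μ(I) by at most O(rₙ).) -/
open MeasureTheory Filter Metric Set Topology
open scoped NNReal ENNReal

/-!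
Since `I` is finite, a neighbourhood of `I` is a finite union of balls, and it is enough that every
ball of radius `r` has mass `O(r)`. A Haar measure has this property because `r ^ d ≤ r` for small
`r`, and the arc measure of an antilipschitz curve has it because the parameters that the curve
sends into a ball of radius `r` form a set of diameter `O(r)`; bounded densities preserve it. The
atomic part violates it at its atoms, but those outside `I` stay away from `I` and those in `I` are
removed.
-/

lemma withDensity_le_smul_s16 {X : Type*} [MeasurableSpace X] {μ : Measure X} {p : X → ℝ≥0∞}
    {M : ℝ≥0∞} (hp : p ≤ᵐ[μ] fun _ => M) : μ.withDensity p ≤ M • μ :=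
  (withDensity_mono hp).trans_eq (withDensity_const M)

/-- `μ` has mass `O(r)` on the sets `s r` as `r → 0⁺`; used for `s r` a ball, a neighbourhood or a
punctured neighbourhood of radius `r`. The bound is stated in `ℝ≥0∞`, because `μ.real (s r)` would
be `0` where the mass is infinite. -/
def HasLinearMassBound {X : Type*} [MeasurableSpace X] (μ : Measure X) (s : ℝ → Set X) : Prop :=
  ∃ C : ℝ≥0, ∀ᶠ r in 𝓝[>] (0 : ℝ), μ (s r) ≤ C * ENNReal.ofReal r

namespace HasLinearMassBound

variable {X : Type*} [MeasurableSpace X] {μ ν : Measure X} {s t : ℝ → Set X}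

lemma mono_set (ht : HasLinearMassBound μ t) (hst : ∀ᶠ r in 𝓝[>] (0 : ℝ), s r ⊆ t r) :
    HasLinearMassBound μ s := by
  obtain ⟨C, hC⟩ := ht
  exact ⟨C, hC.mp (hst.mono fun _ hsub hle => (measure_mono hsub).trans hle)⟩

lemma mono_measure (hν : HasLinearMassBound ν s) (hle : μ ≤ ν) : HasLinearMassBound μ s := by
  obtain ⟨C, hC⟩ := hν
  exact ⟨C, hC.mono fun r hr => (hle (s r)).trans hr⟩

lemma of_eventually_null (h : ∀ᶠ r in 𝓝[>] (0 : ℝ), μ (s r) = 0) : HasLinearMassBound μ s :=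
  ⟨0, h.mono fun r hr => by simp [hr]⟩

lemma add (hμ : HasLinearMassBound μ s) (hν : HasLinearMassBound ν s) :
    HasLinearMassBound (μ + ν) s := by
  obtain ⟨C, hC⟩ := hμ
  obtain ⟨D, hD⟩ := hν
  refine ⟨C + D, ?_⟩
  filter_upwards [hC, hD] with r hCr hDr
  rw [Measure.add_apply, ENNReal.coe_add, add_mul]
  exact add_le_add hCr hDr

lemma smul (hμ : HasLinearMassBound μ s) (w : ℝ≥0) : HasLinearMassBound ((w : ℝ≥0∞) • μ) s := by
  obtain ⟨C, hC⟩ := hμ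
  refine ⟨w * C, hC.mono fun r hr => ?_⟩
  rw [Measure.smul_apply, smul_eq_mul, ENNReal.coe_mul, mul_assoc]
  gcongr

lemma finsetSum {ι : Type*} {m : ι → Measure X} (J : Finset ι)
    (h : ∀ j ∈ J, HasLinearMassBound (m j) s) : HasLinearMassBound (∑ j ∈ J, m j) s :=
  Finset.sum_induction m (HasLinearMassBound · s) (fun _ _ => add)
    (of_eventually_null (by simp)) h

lemma biUnion {ι : Type*} {J : Set ι} (hJ : J.Finite) {u : ι → ℝ → Set X}
    (h : ∀ j ∈ J, HasLinearMassBound μ (u j)) : HasLinearMassBound μ fun r => ⋃ j ∈ J, u j r := by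
  choose! C hC using h
  lift J to Finset ι using hJ
  refine ⟨∑ j ∈ J, C j, ?_⟩
  filter_upwards [(eventually_all_finset J).2 hC] with r hr
  calc μ (⋃ j ∈ J, u j r)
      ≤ ∑ j ∈ J, μ (u j r) := measure_biUnion_finset_le J fun j => u j r
    _ ≤ ∑ j ∈ J, C j * ENNReal.ofReal r := Finset.sum_le_sum hr
    _ = (∑ j ∈ J, C j : ℝ≥0) * ENNReal.ofReal r := by
      rw [ENNReal.ofNNReal_finsetSum, Finset.sum_mul]

lemma withDensity {p : X → ℝ≥0∞} {M : ℝ≥0} (hμ : HasLinearMassBound μ s)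
    (hp : p ≤ᵐ[μ] fun _ => M) : HasLinearMassBound (μ.withDensity p) s :=
  (hμ.smul M).mono_measure (withDensity_le_smul_s16 hp)

lemma map_withDensity {Y : Type*} [MeasurableSpace Y] {g : Y → X} {m : Measure Y} {p : Y → ℝ≥0∞}
    {M : ℝ≥0} (hm : HasLinearMassBound (m.map g) s) (hg : Measurable g)
    (hp : p ≤ᵐ[m] fun _ => M) : HasLinearMassBound ((m.withDensity p).map g) s := by
  refine (hm.smul M).mono_measure ?_
  calc (m.withDensity p).map g
      ≤ ((M : ℝ≥0∞) • m).map g :=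
        Measure.map_mono (withDensity_le_smul_s16 hp) hg
    _ = (M : ℝ≥0∞) • m.map g := Measure.map_smul _ _ _

lemma exists_pos_forall_le (h : HasLinearMassBound μ s) :
    ∃ C : ℝ, 0 < C ∧ ∃ r₁ : ℝ, 0 < r₁ ∧ ∀ r : ℝ, 0 < r → r ≤ r₁ →
      μ (s r) ≤ ENNReal.ofReal (C * r) := by
  obtain ⟨C, hC⟩ := h
  obtain ⟨r₁, hr₁, hsub⟩ := mem_nhdsGT_iff_exists_Ioc_subset.1 hC
  refine ⟨C + 1, by positivity, r₁, hr₁, fun r hr hle => ?_⟩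
  calc μ (s r) ≤ C * ENNReal.ofReal r := hsub ⟨hr, hle⟩
    _ = ENNReal.ofReal (C * r) := by
      rw [ENNReal.ofReal_mul C.coe_nonneg, ENNReal.ofReal_coe_nnreal]
    _ ≤ ENNReal.ofReal ((C + 1) * r) := by gcongr; exact le_add_of_nonneg_right zero_le_one

end HasLinearMassBound

lemma setOf_infDist_le_eq_cthickening_s16 {X : Type*} [PseudoMetricSpace X] {I : Set X}
    (hI : I.Nonempty) {r : ℝ} (hr : 0 ≤ r) : {y | infDist y I ≤ r} = cthickening r I := by
  ext y
  exact (ENNReal.le_ofReal_iff_toReal_le (infEDist_ne_top hI) hr).symm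

lemma HasLinearMassBound.cthickening {X : Type*} [PseudoMetricSpace X] [MeasurableSpace X]
    {μ : Measure X} {I : Set X} (hI : I.Finite)
    (h : ∀ x ∈ I, HasLinearMassBound μ (closedBall x)) :
    HasLinearMassBound μ fun r => cthickening r I := by
  refine (HasLinearMassBound.biUnion hI h).mono_set ?_
  filter_upwards [self_mem_nhdsWithin] with r hr
  exact (hI.isCompact.cthickening_eq_biUnion_closedBall (mem_Ioi.1 hr).le).subset

lemma eventually_measure_cthickening_sdiff_eq_zero {X : Type*} [PseudoEMetricSpace X]
    [MeasurableSpace X] {μ : Measure X} {A I : Set X} (hA : A.Finite) (hμ : μ Aᶜ = 0)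
    (hI : IsClosed I) : ∀ᶠ r in 𝓝[>] (0 : ℝ), μ (cthickening r I \ I) = 0 := by
  have avoid : ∀ᶠ r in 𝓝 (0 : ℝ), ∀ a ∈ A \ I, a ∉ cthickening r I :=
    (eventually_all_finite hA.sdiff).2 fun a ha =>
      eventually_notMem_cthickening_of_infEDist_pos (hI.closure_eq.symm ▸ ha.2)
  filter_upwards [nhdsWithin_le_nhds avoid] with r hr
  exact measure_mono_null (fun y hy hyA => hr y ⟨hyA, hy.2⟩ hy.1) hμ

lemma hasLinearMassBound_closedBall_addHaar {E : Type*} [NormedAddCommGroup E] [NormedSpace ℝ E]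
    [FiniteDimensional ℝ E] [Nontrivial E] [MeasurableSpace E] [BorelSpace E] (ν : Measure E)
    [ν.IsAddHaarMeasure] (x : E) : HasLinearMassBound ν (closedBall x) := by
  refine ⟨(ν (ball 0 1)).toNNReal, ?_⟩
  filter_upwards [Ioc_mem_nhdsGT one_pos] with r ⟨hr₀, hr₁⟩
  rw [Measure.addHaar_closedBall ν x hr₀.le, ENNReal.coe_toNNReal measure_ball_lt_top.ne, mul_comm]
  gcongr
  exact pow_le_of_le_one hr₀.le hr₁ Module.finrank_pos.ne'

section Curve

variable {X : Type*} [PseudoMetricSpace X] {γ : ℝ → X} {T : Set ℝ} {K : ℝ≥0}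

lemma volume_preimage_inter_le_of_antilipschitzWith (hγ : AntilipschitzWith K (T.domRestrict γ))
    (U : Set X) : volume (γ ⁻¹' U ∩ T) ≤ K * ediam U :=
  calc volume (γ ⁻¹' U ∩ T)
      ≤ ediam (γ ⁻¹' U ∩ T) := Real.volume_le_diam _
    _ = ediam (T.domRestrict γ ⁻¹' U) := by
      rw [inter_comm, ← Subtype.image_preimage_coe, isometry_subtype_coe.ediam_image]
      rfl
    _ ≤ K * ediam U := hγ.ediam_preimage_le U

lemma hasLinearMassBound_closedBall_map_volume [MeasurableSpace X] [OpensMeasurableSpace X]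
    (hm : Measurable γ) (hγ : AntilipschitzWith K (T.domRestrict γ)) (x : X) :
    HasLinearMassBound ((volume.restrict T).map γ) (closedBall x) := by
  refine ⟨K * 2, ?_⟩
  filter_upwards [self_mem_nhdsWithin] with r hr
  rw [Measure.map_apply hm measurableSet_closedBall,
    Measure.restrict_apply (hm measurableSet_closedBall)]
  calc volume (γ ⁻¹' closedBall x r ∩ T)
      ≤ K * ediam (closedBall x r) := volume_preimage_inter_le_of_antilipschitzWith hγ _
    _ ≤ K * (2 * ENNReal.ofReal r) := by
      gcongr
      rw [← closedEBall_ofReal (mem_Ioi.1 hr).le]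
      exact ediam_closedEBall_le
    _ = (K * 2 : ℝ≥0) * ENNReal.ofReal r := by push_cast; ring

end Curve

lemma antilipschitzWith_domRestrict_of_mul_abs_sub_le {E : Type*} [SeminormedAddCommGroup E]
    {γ : ℝ → E} {T : Set ℝ} {c : ℝ} (hc : 0 < c)
    (h : ∀ s ∈ T, ∀ t ∈ T, c * |s - t| ≤ ‖γ s - γ t‖) :
    AntilipschitzWith c.toNNReal⁻¹ (T.domRestrict γ) := by
  refine AntilipschitzWith.of_le_mul_dist fun s t => ?_
  rw [NNReal.coe_inv, Real.coe_toNNReal c hc.le, Subtype.dist_eq, Real.dist_eq, dist_eq_norm,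
    le_inv_mul_iff₀ hc]
  exact h s s.2 t t.2

theorem measure_dilation_minus_finite_set_le_general
    {E : Type*} [NormedAddCommGroup E] [NormedSpace ℝ E] [FiniteDimensional ℝ E] [Nontrivial E]
    [MeasurableSpace E] [BorelSpace E] (ν : Measure E) [ν.IsAddHaarMeasure]
    (w₀ w₁ w₂ : ℝ≥0) {K M : ℝ≥0}
    {A : Set E} (hA : A.Finite) {μ₀ : Measure E} (hμ₀ : μ₀ Aᶜ = 0)
    {ι : Type*} [Fintype ι] {T : ι → Set ℝ} {γ : ι → ℝ → E} (hγmeas : ∀ j, Measurable (γ j))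
    (hγ : ∀ j, AntilipschitzWith K ((T j).domRestrict (γ j)))
    {f : ι → ℝ → ℝ≥0∞} (hf : ∀ j, f j ≤ᵐ[volume.restrict (T j)] fun _ => M)
    {p : E → ℝ≥0∞} (hp : p ≤ᵐ[ν] fun _ => M)
    {I : Set E} (hI : I.Finite) (hne : I.Nonempty) :
    ∃ C : ℝ, 0 < C ∧ ∃ r₁ : ℝ, 0 < r₁ ∧ ∀ r : ℝ, 0 < r → r ≤ r₁ →
      ((w₀ : ℝ≥0∞) • μ₀
          + (w₁ : ℝ≥0∞) • ∑ j, ((volume.restrict (T j)).withDensity (f j)).map (γ j)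
          + (w₂ : ℝ≥0∞) • ν.withDensity p) ({y | infDist y I ≤ r} \ I)
        ≤ ENNReal.ofReal (C * r) := by
  have of_balls {m : Measure E} (h : ∀ x, HasLinearMassBound m (closedBall x)) :
      HasLinearMassBound m fun r => cthickening r I \ I :=
    (HasLinearMassBound.cthickening hI fun x _ => h x).mono_set (.of_forall fun _ => sdiff_subset)
  have atoms : HasLinearMassBound μ₀ fun r => cthickening r I \ I :=
    .of_eventually_null (eventually_measure_cthickening_sdiff_eq_zero hA hμ₀ hI.isClosed)
  have curves := HasLinearMassBound.finsetSum Finset.univ fun j _ => of_balls fun x =>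
    (hasLinearMassBound_closedBall_map_volume (hγmeas j) (hγ j) x).map_withDensity
      (hγmeas j) (hf j)
  have density := of_balls fun x => (hasLinearMassBound_closedBall_addHaar ν x).withDensity hp
  refine ((((atoms.smul w₀).add (curves.smul w₁)).add (density.smul w₂)).mono_set
    ?_).exists_pos_forall_le
  filter_upwards [self_mem_nhdsWithin] with r hr
  rw [setOf_infDist_le_eq_cthickening_s16 hne (mem_Ioi.1 hr).le]

/-- for every finite nonempty `I ⊆ ℝ²` there are `C > 0` and `r₁ > 0`
with `μ((I ⊕ r) \ I) ≤ C·r` for all `0 < r ≤ r₁`. -/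
theorem measure_dilation_minus_finite_set_le
    (a₀ A₀ c L π₀ π₁ π₂ : ℝ)
    (ha₀ : 0 < a₀) (ha₀A₀ : a₀ ≤ A₀) (hc : 0 < c) (hcL : c ≤ L)
    (hπ₀ : 0 < π₀) (hπ₁ : 0 < π₁) (hπ₂ : 0 < π₂) (hπsum : π₀ + π₁ + π₂ = 1)
    (A : Set (EuclideanSpace ℝ (Fin 2))) (hAfin : A.Finite) (hAne : A.Nonempty)
    (μ₀ : Measure (EuclideanSpace ℝ (Fin 2))) [IsProbabilityMeasure μ₀]
    (hμ₀supp : μ₀ Aᶜ = 0)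
    (hμ₀atom : ∀ a ∈ A, ENNReal.ofReal a₀ ≤ μ₀ {a})
    (k : ℕ) (γ : Fin k → ℝ → EuclideanSpace ℝ (Fin 2))
    (hγmeas : ∀ j, Measurable (γ j))
    (hγlow : ∀ j, ∀ s ∈ Icc (0:ℝ) 1, ∀ t ∈ Icc (0:ℝ) 1, c * |s - t| ≤ ‖γ j s - γ j t‖)
    (hγup : ∀ j, ∀ s ∈ Icc (0:ℝ) 1, ∀ t ∈ Icc (0:ℝ) 1, ‖γ j s - γ j t‖ ≤ L * |s - t|)
    (R : Set (EuclideanSpace ℝ (Fin 2))) (hR : R = ⋃ j, γ j '' Icc (0:ℝ) 1)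
    (hAR : A ⊆ R)
    (f : Fin k → ℝ → ℝ) (hfmeas : ∀ j, Measurable (f j))
    (hflow : ∀ j, ∀ t ∈ Icc (0:ℝ) 1, a₀ ≤ f j t)
    (hfup : ∀ j, ∀ t ∈ Icc (0:ℝ) 1, f j t ≤ A₀)
    (μ₁ : Measure (EuclideanSpace ℝ (Fin 2))) [IsProbabilityMeasure μ₁]
    (hμ₁ : μ₁ = ∑ j : Fin k, Measure.map (γ j)
      ((volume.restrict (Icc (0:ℝ) 1)).withDensity fun t => ENNReal.ofReal (f j t)))
    (p₂ : EuclideanSpace ℝ (Fin 2) → ℝ) (hp₂meas : Measurable p₂)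
    (hp₂low : ∀ x, 0 ≤ p₂ x) (hp₂up : ∀ x, p₂ x ≤ A₀)
    (μ₂ : Measure (EuclideanSpace ℝ (Fin 2))) [IsProbabilityMeasure μ₂]
    (hμ₂ : μ₂ = volume.withDensity fun x => ENNReal.ofReal (p₂ x))
    (μ : Measure (EuclideanSpace ℝ (Fin 2)))
    (hμ : μ = ENNReal.ofReal π₀ • μ₀ + ENNReal.ofReal π₁ • μ₁ + ENNReal.ofReal π₂ • μ₂)
    :
    ∀ I : Set (EuclideanSpace ℝ (Fin 2)), I.Finite → I.Nonempty →
      ∃ C : ℝ, 0 < C ∧ ∃ r₁ : ℝ, 0 < r₁ ∧ ∀ r : ℝ, 0 < r → r ≤ r₁ →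
        μ ({y | infDist y I ≤ r} \ I) ≤ ENNReal.ofReal (C * r) := by
  subst hμ₁ hμ₂ hμ
  exact fun I => measure_dilation_minus_finite_set_le_general volume π₀.toNNReal π₁.toNNReal
    π₂.toNNReal hAfin hμ₀supp hγmeas
    (fun j => antilipschitzWith_domRestrict_of_mul_abs_sub_le hc (hγlow j))
    (fun j => ae_restrict_of_forall_mem measurableSet_Icc fun t ht =>
      ENNReal.ofReal_le_ofReal (hfup j t ht))
    (.of_forall fun x => ENNReal.ofReal_le_ofReal (hp₂up x))
end
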